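/- arXiv:2301.09265 — 2 statements merged into one kernel-verified Lean document; each statement's English description precedes it below -/
import Mathlib

section
/- Let G be a finite group and p a prime. Suppose G is p-index extremal (G ∈ R(p)) and, moreover, some p-element of G has nontrivial p-index (i.e., G ∈ R(p)*). Then G has a normal p-complement, i.e., there exists a normal subgroup N of G such that the order of N is not divisible by p and the index of N in G is a power of p. -/
/-- The index of an element `x` of a group `G`: the size of its conjugacy class,
`|x^G| = |G : C_G(x)|`. -/
noncomputable def classSize {G : Type*} [Group G] (x : G) : ℕ :=
  (Subgroup.centralizer {x}).index

/-- The `p`-index of `x`: the `p`-part of `|x^G|`. -/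
noncomputable def pIndex (p : ℕ) {G : Type*} [Group G] (x : G) : ℕ :=
  p ^ ((classSize x).factorization p)

/-- `G` is `p`-index extremal (`G ∈ R(p)`): the set `N(G)_p` of `p`-indices of elements of `G`
contains exactly one nontrivial element. -/
def IsPIndexExtremal (p : ℕ) (G : Type*) [Group G] : Prop :=
  ∃! a : ℕ, a ≠ 1 ∧ ∃ x : G, pIndex p x = a

/-- `x` is a `p`-element: its order is a power of `p`. -/
def IsPElement (p : ℕ) {G : Type*} [Group G] (x : G) : Prop :=
  ∃ k : ℕ, orderOf x = p ^ k


set_option linter.unusedSectionVars false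
set_option linter.style.haveILetI false
section PA
variable {G : Type*} [Group G] {p : ℕ}

/-- p-element. -/
def PEl (p : ℕ) {G : Type*} [Group G] (x : G) : Prop := ∃ k : ℕ, x ^ (p ^ k) = 1

/-- p-prime-element. -/
def PrEl (p : ℕ) {G : Type*} [Group G] (y : G) : Prop := ∃ m : ℕ, Nat.Coprime p m ∧ y ^ m = 1

/-- p-part of the order of a subgroup. -/
noncomputable def pp (p : ℕ) {G : Type*} [Group G] (H : Subgroup G) : ℕ :=
  p ^ ((Nat.card H).factorization p)

/-- Sylow subgroup of a subgroup. -/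
def IsSyl (p : ℕ) {G : Type*} [Group G] (H T : Subgroup G) : Prop :=
  T ≤ H ∧ IsPGroup p T ∧ Nat.card T = pp p H

/-- centralizer of an element. -/
def CC {G : Type*} [Group G] (x : G) : Subgroup G := Subgroup.centralizer {x}

/-- conjugate of a subgroup. -/
def cj {G : Type*} [Group G] (g : G) (T : Subgroup G) : Subgroup G :=
  T.map (MulAut.conj g).toMonoidHom

theorem mem_CC {x g : G} : g ∈ CC x ↔ Commute g x := by
  rw [CC, Subgroup.mem_centralizer_singleton_iff]; exact eq_comm.trans (by rw [eq_comm]; rfl)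

theorem mem_cj {g x : G} {T : Subgroup G} : x ∈ cj g T ↔ g⁻¹ * x * g ∈ T := by
  constructor
  · rintro ⟨t, ht, rfl⟩
    simpa [mul_assoc] using ht
  · intro h
    exact ⟨_, h, by simp [mul_assoc]⟩

theorem conj_mem_cj {g x : G} {T : Subgroup G} : g * x * g⁻¹ ∈ cj g T ↔ x ∈ T := by
  rw [mem_cj]; simp [mul_assoc]

theorem card_cj (g : G) (T : Subgroup G) : Nat.card (cj g T) = Nat.card T :=
  Subgroup.card_map_of_injective (MulAut.conj g).injective

theorem pp_cj (g : G) (T : Subgroup G) : pp p (cj g T) = pp p T := by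
  rw [pp, pp, card_cj]

theorem cj_mono {g : G} {S T : Subgroup G} (h : S ≤ T) : cj g S ≤ cj g T := Subgroup.map_mono h

theorem cj_cj (g h : G) (T : Subgroup G) : cj g (cj h T) = cj (g * h) T := by
  ext x; simp [mem_cj, mul_assoc]

theorem cj_one (T : Subgroup G) : cj 1 T = T := by
  ext x; simp [mem_cj]

theorem cj_inv_cj (g : G) (T : Subgroup G) : cj g⁻¹ (cj g T) = T := by
  rw [cj_cj, inv_mul_cancel, cj_one]

theorem cj_cj_inv (g : G) (T : Subgroup G) : cj g (cj g⁻¹ T) = T := by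
  rw [cj_cj, mul_inv_cancel, cj_one]

theorem cj_self {g : G} {H : Subgroup G} (hg : g ∈ H) : cj g H = H := by
  ext x
  rw [mem_cj]
  constructor
  · intro h
    simpa [mul_assoc] using H.mul_mem (H.mul_mem hg h) (H.inv_mem hg)
  · intro h; exact H.mul_mem (H.mul_mem (H.inv_mem hg) h) hg

/-- normalizer -/
def NN {G : Type*} [Group G] (T : Subgroup G) : Subgroup G where
  carrier := {g | cj g T = T}
  mul_mem' := fun {a b} ha hb => by
    change cj (a * b) T = T
    rw [← cj_cj]; rw [show cj b T = T from hb]; exact ha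
  one_mem' := cj_one T
  inv_mem' := fun {a} ha => by
    change cj a⁻¹ T = T
    conv_lhs => rw [← show cj a T = T from ha]
    exact cj_inv_cj a T

theorem mem_NN {g : G} {T : Subgroup G} : g ∈ NN T ↔ cj g T = T := Iff.rfl

theorem conj_mem_of_NN {g x : G} {T : Subgroup G} (hg : g ∈ NN T) (hx : x ∈ T) :
    g * x * g⁻¹ ∈ T := by
  rw [mem_NN] at hg
  rw [← hg]; exact conj_mem_cj.2 hx

theorem conj_mem_of_NN' {g x : G} {T : Subgroup G} (hg : g ∈ NN T) (hx : x ∈ T) :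
    g⁻¹ * x * g ∈ T := by
  simpa using conj_mem_of_NN ((NN T).inv_mem hg) hx

theorem conj_mem_iff_of_NN {g x : G} {T : Subgroup G} (hg : g ∈ NN T) :
    g * x * g⁻¹ ∈ T ↔ x ∈ T := by
  refine ⟨fun h => ?_, conj_mem_of_NN hg⟩
  have := conj_mem_of_NN' hg h
  simpa [mul_assoc] using this

theorem le_NN (T : Subgroup G) : T ≤ NN T := fun _ h => cj_self h

theorem cj_eq_of_commute {y : G} {T : Subgroup G} (h : ∀ t ∈ T, Commute t y) : cj y T = T := by
  have key : ∀ t ∈ T, y * t * y⁻¹ = t := fun t ht => by rw [← (h t ht).eq]; simp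
  ext t
  constructor
  · rintro ⟨s, hs, rfl⟩
    change y * s * y⁻¹ ∈ T
    rwa [key s hs]
  · intro ht
    exact ⟨t, ht, key t ht⟩

theorem cj_CC (g x : G) : cj g (CC x) = CC (g * x * g⁻¹) := by
  ext y
  rw [mem_cj, mem_CC, mem_CC]
  constructor
  · intro h
    have := h.map (MulAut.conj g)
    simpa [mul_assoc] using this
  · intro h
    have := h.map (MulAut.conj g⁻¹)
    simpa [mul_assoc] using this

theorem PEl.conj {x : G} (h : PEl p x) (g : G) : PEl p (g * x * g⁻¹) := by
  obtain ⟨k, hk⟩ := h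
  exact ⟨k, by rw [conj_pow, hk]; simp⟩

theorem PrEl.conj {x : G} (h : PrEl p x) (g : G) : PrEl p (g * x * g⁻¹) := by
  obtain ⟨k, hk, hk'⟩ := h
  exact ⟨k, hk, by rw [conj_pow, hk']; simp⟩

theorem PEl.conj' {x : G} (h : PEl p x) (g : G) : PEl p (g⁻¹ * x * g) := by
  simpa using h.conj g⁻¹

theorem PrEl.conj' {x : G} (h : PrEl p x) (g : G) : PrEl p (g⁻¹ * x * g) := by
  simpa using h.conj g⁻¹

theorem PEl.one : PEl p (1 : G) := ⟨0, by simp⟩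
theorem PrEl.one : PrEl p (1 : G) := ⟨1, by simp, by simp⟩

theorem PEl.inv {x : G} (h : PEl p x) : PEl p x⁻¹ := by
  obtain ⟨k, hk⟩ := h
  exact ⟨k, by rw [inv_pow, hk, inv_one]⟩

theorem PrEl.inv {x : G} (h : PrEl p x) : PrEl p x⁻¹ := by
  obtain ⟨k, hk, hk'⟩ := h
  exact ⟨k, hk, by rw [inv_pow, hk', inv_one]⟩

theorem PEl.pow {x : G} (h : PEl p x) (n : ℕ) : PEl p (x ^ n) := by
  obtain ⟨k, hk⟩ := h
  exact ⟨k, by rw [← pow_mul, mul_comm, pow_mul, hk, one_pow]⟩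

theorem PrEl.pow {x : G} (h : PrEl p x) (n : ℕ) : PrEl p (x ^ n) := by
  obtain ⟨k, hk, hk'⟩ := h
  exact ⟨k, hk, by rw [← pow_mul, mul_comm, pow_mul, hk', one_pow]⟩

theorem PEl.mul {x y : G} (hx : PEl p x) (hy : PEl p y) (h : Commute x y) : PEl p (x * y) := by
  obtain ⟨k, hk⟩ := hx
  obtain ⟨l, hl⟩ := hy
  refine ⟨k + l, ?_⟩
  rw [h.mul_pow, pow_add, pow_mul, hk, mul_comm, pow_mul, hl]; simp

theorem PrEl.mul {x y : G} (hx : PrEl p x) (hy : PrEl p y) (h : Commute x y) :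
    PrEl p (x * y) := by
  obtain ⟨k, hk, hk'⟩ := hx
  obtain ⟨l, hl, hl'⟩ := hy
  refine ⟨k * l, hk.mul_right hl, ?_⟩
  rw [h.mul_pow, pow_mul, hk', mul_comm, pow_mul, hl']; simp

theorem one_of_PEl_PrEl {x : G} (hx : PEl p x) (hy : PrEl p x) : x = 1 := by
  obtain ⟨k, hk⟩ := hx
  obtain ⟨l, hl, hl'⟩ := hy
  have h1 := orderOf_dvd_of_pow_eq_one hk
  have h2 := orderOf_dvd_of_pow_eq_one hl'
  have : orderOf x ∣ 1 := by
    have h3 := Nat.dvd_gcd h1 h2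
    rwa [Nat.Coprime.gcd_eq_one (hl.pow_left k)] at h3
  exact orderOf_eq_one_iff.1 (Nat.dvd_one.1 this)

theorem pel_of_mem {T : Subgroup G} (h : IsPGroup p T) {x : G} (hx : x ∈ T) : PEl p x := by
  obtain ⟨k, hk⟩ := h ⟨x, hx⟩
  exact ⟨k, by simpa using congrArg Subtype.val hk⟩

theorem isPGroup_of_pel {T : Subgroup G} (h : ∀ x ∈ T, PEl p x) : IsPGroup p T := by
  rintro ⟨x, hx⟩
  obtain ⟨k, hk⟩ := h x hx
  exact ⟨k, by ext; simpa using hk⟩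

theorem isPGroup_zpowers {x : G} (hx : PEl p x) : IsPGroup p (Subgroup.zpowers x) := by
  apply isPGroup_of_pel
  rintro y ⟨n, rfl⟩
  obtain ⟨k, hk⟩ := hx
  refine ⟨k, ?_⟩
  simp only
  rw [← zpow_natCast, ← zpow_mul, mul_comm, zpow_mul, zpow_natCast, hk, one_zpow]

theorem isPGroup_cj {T : Subgroup G} (h : IsPGroup p T) (g : G) : IsPGroup p (cj g T) := h.map _

variable [Finite G] [hp : Fact p.Prime]

theorem decomp (p : ℕ) [hp : Fact p.Prime] (g : G) : ∃ x y : G, PEl p x ∧ PrEl p y ∧ x * y = g ∧ Commute x y ∧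
    x ∈ Subgroup.zpowers g ∧ y ∈ Subgroup.zpowers g := by
  have h0 : orderOf g ≠ 0 := (orderOf_pos g).ne'
  obtain ⟨k, m, hm, he⟩ := Nat.exists_eq_pow_mul_and_not_dvd h0 p hp.out.ne_one
  have hc : Nat.Coprime p m := (Nat.Prime.coprime_iff_not_dvd hp.out).2 hm
  have hc' : Nat.Coprime (p ^ k) m := hc.pow_left k
  have hb := Nat.gcd_eq_gcd_ab (p ^ k) m
  rw [hc'.gcd_eq_one] at hb
  have hg : ∀ n : ℤ, g ^ ((p : ℤ) ^ k * m * n) = 1 := by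
    intro n
    rw [zpow_mul]
    have : g ^ ((p : ℤ) ^ k * m) = 1 := by
      have h1 := pow_orderOf_eq_one g
      rw [he] at h1
      exact_mod_cast h1
    rw [this, one_zpow]
  refine ⟨g ^ ((m : ℤ) * Nat.gcdB (p ^ k) m), g ^ (((p ^ k : ℕ) : ℤ) * Nat.gcdA (p ^ k) m),
    ⟨k, ?_⟩, ⟨m, hc, ?_⟩, ?_, (Commute.refl g).zpow_zpow _ _, ⟨_, rfl⟩, ⟨_, rfl⟩⟩
  · rw [← zpow_natCast, ← zpow_mul]
    rw [← hg (Nat.gcdB (p ^ k) m)]; congr 1; push_cast; ring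
  · rw [← zpow_natCast, ← zpow_mul]
    rw [← hg (Nat.gcdA (p ^ k) m)]; congr 1; push_cast; ring
  · rw [← zpow_add, add_comm, ← hb]; simp

theorem commute_of_mem_zpowers {x g h : G} (hx : x ∈ Subgroup.zpowers g) (hh : Commute h g) :
    Commute h x := by
  obtain ⟨n, rfl⟩ := hx
  exact hh.zpow_right n

theorem exists_syl_ge {H Q : Subgroup G} (hQ : IsPGroup p Q) (h : Q ≤ H) :
    ∃ T, IsSyl p H T ∧ Q ≤ T := by
  have h1 : IsPGroup p (Q.subgroupOf H) := hQ.comap_of_injective _ H.subtype_injective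
  obtain ⟨S, hS⟩ := h1.exists_le_sylow
  refine ⟨(S : Subgroup H).map H.subtype, ⟨Subgroup.map_subtype_le _, S.2.map _, ?_⟩, ?_⟩
  · rw [Subgroup.card_map_of_injective H.subtype_injective, pp]
    exact S.card_eq_multiplicity
  · intro x hx
    exact ⟨⟨x, h hx⟩, hS hx, rfl⟩

theorem exists_syl (p : ℕ) [hp : Fact p.Prime] (H : Subgroup G) : ∃ T, IsSyl p H T := by
  obtain ⟨T, hT, -⟩ := exists_syl_ge (p := p) (H := H) (Q := ⊥) IsPGroup.of_bot bot_le
  exact ⟨T, hT⟩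

theorem exists_syl_mem {H : Subgroup G} {x : G} (hx : PEl p x) (h : x ∈ H) :
    ∃ T, IsSyl p H T ∧ x ∈ T := by
  obtain ⟨T, hT, hT'⟩ := exists_syl_ge (isPGroup_zpowers hx) ((Subgroup.zpowers_le).2 h)
  exact ⟨T, hT, hT' (Subgroup.mem_zpowers x)⟩

theorem IsSyl.conj {H T : Subgroup G} (h : IsSyl p H T) (g : G) : IsSyl p (cj g H) (cj g T) :=
  ⟨cj_mono h.1, isPGroup_cj h.2.1 g, by rw [card_cj, pp_cj, h.2.2]⟩

theorem IsSyl.conj_self {H T : Subgroup G} (h : IsSyl p H T) {g : G} (hg : g ∈ H) :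
    IsSyl p H (cj g T) := by
  have := h.conj g
  rwa [cj_self hg] at this

theorem pp_mono {H K : Subgroup G} (h : H ≤ K) : pp p H ≤ pp p K := by
  apply Nat.pow_le_pow_right hp.out.pos
  exact (Nat.factorization_le_iff_dvd Nat.card_pos.ne' Nat.card_pos.ne').2
    (Subgroup.card_dvd_of_le h) p

theorem pp_of_pgroup {Q : Subgroup G} (hQ : IsPGroup p Q) : pp p Q = Nat.card Q := by
  obtain ⟨n, hn⟩ := IsPGroup.iff_card.1 hQ
  rw [pp, hn, Nat.factorization_pow, hp.out.factorization]; simp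

theorem card_le_pp {H Q : Subgroup G} (hQ : IsPGroup p Q) (h : Q ≤ H) :
    Nat.card Q ≤ pp p H := by
  rw [← pp_of_pgroup hQ]; exact pp_mono h

theorem isSyl_of_le_card {H Q : Subgroup G} (hQ : IsPGroup p Q) (h : Q ≤ H)
    (hc : pp p H ≤ Nat.card Q) : IsSyl p H Q := ⟨h, hQ, le_antisymm (card_le_pp hQ h) hc⟩

theorem mem_NN_of_le {g : G} {T : Subgroup G} (h : ∀ t ∈ T, g * t * g⁻¹ ∈ T) : g ∈ NN T := by
  rw [mem_NN]
  apply Subgroup.eq_of_le_of_card_ge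
  · rintro _ ⟨t, ht, rfl⟩
    exact h t ht
  · rw [card_cj]

theorem eq_of_le_of_card {A B : Subgroup G} (h : A ≤ B) (hc : Nat.card B ≤ Nat.card A) : A = B :=
  Subgroup.eq_of_le_of_card_ge h hc

theorem IsSyl.eq_of_le {H T Q : Subgroup G} (hT : IsSyl p H T) (hQ : IsPGroup p Q) (h : Q ≤ H)
    (hTQ : T ≤ Q) : T = Q := eq_of_le_of_card hTQ (by rw [hT.2.2]; exact card_le_pp hQ h)

theorem IsSyl.up {H K T : Subgroup G} (hT : IsSyl p H T) (h : H ≤ K) (hc : pp p K ≤ pp p H) :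
    IsSyl p K T := isSyl_of_le_card hT.2.1 (hT.1.trans h) (by rw [hT.2.2]; exact hc)

theorem IsSyl.down {H K T : Subgroup G} (hT : IsSyl p K T) (h : H ≤ K) (hc : T ≤ H) :
    IsSyl p H T := isSyl_of_le_card hT.2.1 hc (by rw [hT.2.2]; exact pp_mono h)

/-- Sylow conjugacy. -/
theorem IsSyl.exists_conj {H T Q : Subgroup G} (hT : IsSyl p H T) (hQ : IsPGroup p Q)
    (h : Q ≤ H) : ∃ k ∈ H, Q ≤ cj k T := by
  obtain ⟨S, hS, hQS⟩ := exists_syl_ge hQ h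
  have key : ∀ U : Subgroup G, IsSyl p H U → ∃ V : Sylow p H, (V : Subgroup H) = U.subgroupOf H := by
    intro U hU
    refine ⟨Sylow.ofCard (U.subgroupOf H) ?_, ?_⟩
    · have : Nat.card (U.subgroupOf H) = Nat.card U :=
        Nat.card_congr (Subgroup.subgroupOfEquivOfLe hU.1).toEquiv
      rw [this, hU.2.2, pp]
    · rfl
  obtain ⟨V, hV⟩ := key T hT
  obtain ⟨V', hV'⟩ := key S hS
  obtain ⟨k, hk⟩ := MulAction.exists_smul_eq H V V'
  refine ⟨k, k.2, fun x hx => ?_⟩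
  have hx' : (⟨x, h hx⟩ : H) ∈ (V' : Subgroup H) := by
    rw [hV']; exact hQS hx
  rw [← hk, Sylow.coe_subgroup_smul, Subgroup.mem_pointwise_smul_iff_inv_smul_mem, hV,
    Subgroup.mem_subgroupOf] at hx'
  rw [mem_cj]
  simpa [MulAut.smul_def] using hx'

theorem IsSyl.exists_conj_eq {H T S : Subgroup G} (hT : IsSyl p H T) (hS : IsSyl p H S) :
    ∃ k ∈ H, S = cj k T := by
  obtain ⟨k, hk, h⟩ := hT.exists_conj hS.2.1 hS.1
  exact ⟨k, hk, eq_of_le_of_card h (by rw [card_cj, hT.2.2, hS.2.2])⟩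

theorem IsSyl.exists_conj_mem {H T : Subgroup G} (hT : IsSyl p H T) {x : G} (hx : PEl p x)
    (h : x ∈ H) : ∃ k ∈ H, x ∈ cj k T := by
  obtain ⟨k, hk, h⟩ := hT.exists_conj (isPGroup_zpowers hx) ((Subgroup.zpowers_le).2 h)
  exact ⟨k, hk, h (Subgroup.mem_zpowers x)⟩

theorem pp_eq_of_dvd_lt {a b : ℕ} {H K : Subgroup G} (ha : pp p H = a) (hb : pp p K = b)
    (h : a < b) : p * a ≤ b := by
  subst ha hb
  unfold pp at *
  rw [← pow_succ']
  exact Nat.pow_le_pow_right hp.out.pos ((Nat.pow_lt_pow_iff_right hp.out.one_lt).1 h)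

theorem exists_syl_centralizer_of_pp {y : G} (hb : pp p (CC y) = pp p (⊤ : Subgroup G)) {x : G}
    (hx : PEl p x) (hxy : Commute x y) :
    ∃ P, IsSyl p (⊤ : Subgroup G) P ∧ x ∈ P ∧ ∀ t ∈ P, Commute t y := by
  obtain ⟨T, hT, hxT⟩ := exists_syl_mem hx (mem_CC.2 hxy)
  exact ⟨T, hT.up le_top hb.ge, hxT, fun t ht => mem_CC.1 (hT.1 ht)⟩

end PA

set_option linter.unusedSectionVars false
set_option linter.style.haveILetI false
section PB
variable {G : Type*} [Group G] [Finite G] {p : ℕ} [hp : Fact p.Prime]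

open MulAction in
theorem burnside_count (G Ω : Type*) [Group G] [Finite G] [Finite Ω] [MulAction G Ω]
    [Fintype G] :
    ∑ g : G, Nat.card (fixedBy Ω g) = Nat.card (Quotient (orbitRel G Ω)) * Nat.card G := by
  classical
  have : Fintype Ω := Fintype.ofFinite _
  have h := MulAction.sum_card_fixedBy_eq_card_orbits_mul_card_group G Ω
  simp only [Nat.card_eq_fintype_card]
  convert h

open MulAction in
theorem trivial_of_fix (G Ω : Type*) [Group G] [Finite G] [Finite Ω] [MulAction G Ω] (r : ℕ)
    (hr : Nat.card (Quotient (orbitRel G Ω)) ≤ r) (hfix : ∀ g : G, r ≤ Nat.card (fixedBy Ω g)) :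
    ∀ (g : G) (a : Ω), g • a = a := by
  classical
  have : Fintype G := Fintype.ofFinite _
  have h := burnside_count G Ω
  have hsum : ∑ g : G, Nat.card (fixedBy Ω g) ≤ ∑ g : G, r := by
    rw [h]; simp only [Finset.sum_const, Finset.card_univ, smul_eq_mul, Nat.card_eq_fintype_card]
    rw [mul_comm]; exact Nat.mul_le_mul_left _ hr
  have heq : ∀ g : G, r = Nat.card (fixedBy Ω g) := by
    intro g
    exact (Finset.sum_eq_sum_iff_of_le (fun i _ => hfix i)).1
      (le_antisymm (Finset.sum_le_sum (fun i _ => hfix i)) hsum) g (Finset.mem_univ g)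
  have h1 : Nat.card (fixedBy Ω (1 : G)) = Nat.card Ω := by
    rw [fixedBy_one_eq_univ]
    exact Nat.card_congr (Equiv.Set.univ Ω)
  intro g a
  have h2 : Nat.card (fixedBy Ω g) = Nat.card Ω := by rw [← heq g, heq 1, h1]
  have h3 : fixedBy Ω g = Set.univ := by
    have h4 : (fixedBy Ω g).ncard = (Set.univ : Set Ω).ncard := by
      rw [Set.ncard_univ]; exact h2
    exact Set.eq_of_subset_of_ncard_le (Set.subset_univ _) h4.ge
  have : a ∈ fixedBy Ω g := by rw [h3]; trivial
  exact this

/-- A subgroup meeting all conjugacy classes is the whole group. -/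
theorem cover_top (M : Subgroup G) (h : ∀ g : G, ∃ k : G, k⁻¹ * g * k ∈ M) : M = ⊤ := by
  have key := trivial_of_fix G (G ⧸ M) 1 ?_ ?_
  · rw [eq_top_iff]
    intro g _
    have := key g ((1 : G) : G ⧸ M)
    rw [MulAction.Quotient.smul_coe, eq_comm, QuotientGroup.eq] at this
    simpa using this
  · apply Finite.card_le_one_iff_subsingleton.2
    exact MulAction.pretransitive_iff_subsingleton_quotient G (G ⧸ M) |>.1 inferInstance
  · intro g
    obtain ⟨k, hk⟩ := h g
    have : Nonempty (MulAction.fixedBy (G ⧸ M) g) := by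
      refine ⟨((k : G) : G ⧸ M), ?_⟩
      rw [MulAction.mem_fixedBy, MulAction.Quotient.smul_coe, eq_comm, QuotientGroup.eq]
      simpa [mul_assoc] using hk
    exact Nat.card_pos

/-- relative version -/
theorem cover_le {H M : Subgroup G} (hMH : M ≤ H) (h : ∀ g ∈ H, ∃ k ∈ H, k⁻¹ * g * k ∈ M) :
    M = H := by
  have := cover_top (M.subgroupOf H) (by
    rintro ⟨g, hg⟩
    obtain ⟨k, hk, hk'⟩ := h g hg
    exact ⟨⟨k, hk⟩, hk'⟩)
  exact le_antisymm hMH (Subgroup.subgroupOf_eq_top.1 this)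

/-- conjugation action on an invariant set -/
@[reducible]
def conjSub (B : Set G) (hB : ∀ b ∈ B, ∀ g : G, g * b * g⁻¹ ∈ B) : MulAction G B where
  smul g b := ⟨g * b * g⁻¹, hB b b.2 g⟩
  one_smul b := by ext; change (1 : G) * b * 1⁻¹ = b; simp
  mul_smul g h b := by
    ext; change (g * h) * (b : G) * (g * h)⁻¹ = g * (h * b * h⁻¹) * g⁻¹; simp [mul_assoc]

theorem central_of_fix (B Z : Set G) (hB : ∀ b ∈ B, ∀ g : G, g * b * g⁻¹ ∈ B)
    (hrep : ∀ b ∈ B, ∃ z ∈ Z, ∃ g : G, z = g * b * g⁻¹)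
    (hfix : ∀ g : G, Nat.card Z ≤ Nat.card {b | b ∈ B ∧ Commute g b}) :
    ∀ b ∈ B, ∀ g : G, Commute g b := by
  letI := conjSub B hB
  have hsm : ∀ (g : G) (b : B), ((g • b : B) : G) = g * b * g⁻¹ := fun g b => rfl
  have key := trivial_of_fix G B (Nat.card Z) ?_ ?_
  · intro b hb g
    have := congrArg Subtype.val (key g ⟨b, hb⟩)
    rw [hsm] at this
    exact mul_inv_eq_iff_eq_mul.1 this
  · choose! f hf using hrep
    apply Nat.card_le_card_of_injective
      (fun o : Quotient (MulAction.orbitRel G B) => (⟨f o.out, (hf _ o.out.2).1⟩ : Z))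
    intro o o' hoo
    have h1 : f o.out = f o'.out := congrArg Subtype.val hoo
    obtain ⟨-, g, hg⟩ := hf _ o.out.2
    obtain ⟨-, g', hg'⟩ := hf _ o'.out.2
    rw [← Quotient.out_eq o, ← Quotient.out_eq o']
    apply Quotient.sound
    refine ⟨g⁻¹ * g', ?_⟩
    ext
    change ((g⁻¹ * g') • o'.out : B).1 = _
    rw [hsm]
    rw [hg, hg'] at h1
    calc _ = g⁻¹ * (g' * (o'.out : B).1 * g'⁻¹) * g := by group
      _ = _ := by rw [← h1]; group
  · intro g
    refine (hfix g).trans (Nat.card_le_card_of_injective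
      (fun b => (⟨⟨b.1, b.2.1⟩, ?_⟩ : MulAction.fixedBy B g)) ?_)
    · rw [MulAction.mem_fixedBy]
      ext
      rw [hsm]
      have := b.2.2.eq
      rw [this]; simp
    · intro b b' h
      ext
      exact congrArg (fun z => (z.1 : G)) h

/-- If the p-prime-elements are closed under multiplication we are done. -/
theorem final_of_closed (hcl : ∀ a b : G, PrEl p a → PrEl p b → PrEl p (a * b)) :
    ∃ N : Subgroup G, N.Normal ∧ ¬ p ∣ Nat.card N ∧ ∃ k : ℕ, N.index = p ^ k := by
  let N : Subgroup G :=
    { carrier := {y | PrEl p y}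
      mul_mem' := fun {a b} ha hb => hcl a b ha hb
      one_mem' := PrEl.one
      inv_mem' := fun {a} ha => PrEl.inv ha }
  have hN : ∀ y, y ∈ N ↔ PrEl p y := fun y => Iff.rfl
  haveI hnorm : N.Normal := ⟨fun y hy g => PrEl.conj hy g⟩
  refine ⟨N, hnorm, ?_, ?_⟩
  · intro hd
    obtain ⟨x, hx⟩ := exists_prime_orderOf_dvd_card' p hd
    have h1 : (x : G) = 1 := by
      apply one_of_PEl_PrEl (p := p) _ x.2
      refine ⟨1, ?_⟩
      have := pow_orderOf_eq_one x
      rw [hx] at this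
      simpa using congrArg Subtype.val this
    have h2 : x = 1 := Subtype.ext h1
    rw [h2, orderOf_one] at hx
    exact hp.out.ne_one hx.symm
  · have : IsPGroup p (G ⧸ N) := by
      intro g
      obtain ⟨g, rfl⟩ := QuotientGroup.mk_surjective g
      obtain ⟨x, y, ⟨k, hk⟩, hy, hxy, -⟩ := decomp p g
      refine ⟨k, ?_⟩
      rw [← hxy, QuotientGroup.mk_mul, (QuotientGroup.eq_one_iff y).2 hy, mul_one,
        ← QuotientGroup.mk_pow, hk, QuotientGroup.mk_one]
    obtain ⟨n, hn⟩ := IsPGroup.iff_card.1 this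
    exact ⟨n, hn⟩

/-- S1 -/
theorem s1 {H T : Subgroup G} (hT : IsSyl p H T)
    (h : ∀ y ∈ H, PrEl p y → ∃ T', IsSyl p H T' ∧ ∀ t ∈ T', Commute t y) :
    (∀ g ∈ H, cj g T = T) ∧ (∀ x ∈ H, PEl p x → x ∈ T) ∧
      (∀ y ∈ H, PrEl p y → ∀ t ∈ T, Commute t y) := by
  have h1 : ∀ g ∈ H, cj g T = T := by
    let M : Subgroup G := H ⊓ NN T
    have hM : M = H := by
      apply cover_le inf_le_left
      intro g hg
      obtain ⟨x, y, hx, hy, hxy, hc, hxg, hyg⟩ := decomp p g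
      have hzH : Subgroup.zpowers g ≤ H := Subgroup.zpowers_le.2 hg
      obtain ⟨T', hT', hcomm⟩ := h y (hzH hyg) hy
      have hT'' : IsSyl p (H ⊓ CC y) T' := hT'.down inf_le_left
        (le_inf hT'.1 (fun t ht => mem_CC.2 (hcomm t ht)))
      obtain ⟨k, hk, hxk⟩ := hT''.exists_conj_mem hx ⟨hzH hxg, mem_CC.2 hc⟩
      have hS := hT'.conj_self hk.1
      obtain ⟨l, hl, hl'⟩ := hT.exists_conj_eq hS
      have hyS : ∀ t ∈ cj k T', Commute t y := by
        have := (hT''.conj_self hk).1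
        intro t ht
        exact mem_CC.1 (this ht).2
      refine ⟨l, hl, H.mul_mem (H.mul_mem (H.inv_mem hl) hg) hl, ?_⟩
      have hgS : cj g (cj k T') = cj k T' := by
        rw [← hxy, ← cj_cj]
        have : cj y (cj k T') = cj k T' := cj_eq_of_commute hyS
        rw [this, cj_self hxk]
      rw [hl', cj_cj] at hgS
      have : cj (l⁻¹ * g * l) T = T := by
        rw [mul_assoc, ← cj_cj, hgS, cj_inv_cj]
      exact this
    intro g hg
    rw [← hM] at hg
    exact hg.2
  refine ⟨h1, ?_, ?_⟩
  · intro x hx hpx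
    obtain ⟨k, hk, hk'⟩ := hT.exists_conj_mem hpx hx
    rwa [h1 k hk] at hk'
  · intro y hy hpy
    obtain ⟨T', hT', hc⟩ := h y hy hpy
    obtain ⟨k, hk, hk'⟩ := hT.exists_conj_eq hT'
    rw [h1 k hk] at hk'
    subst hk'
    exact hc

end PB

set_option linter.unusedSectionVars false
set_option linter.style.haveILetI false
section PC
variable {G : Type*} [Group G] [Finite G] {p : ℕ} [hp : Fact p.Prime]

theorem commute_of_coprime_pow {g x : G} {a b : ℕ} (hab : Nat.Coprime a b)
    (ha : Commute g (x ^ a)) (hb : Commute g (x ^ b)) : Commute g x := by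
  have hbz := Nat.gcd_eq_gcd_ab a b
  rw [hab.gcd_eq_one] at hbz
  have : x = (x ^ a) ^ (Nat.gcdA a b) * (x ^ b) ^ (Nat.gcdB a b) := by
    rw [← zpow_natCast, ← zpow_natCast, ← zpow_mul, ← zpow_mul, ← zpow_add, ← hbz]; simp
  rw [this]
  exact (ha.zpow_right _).mul_right (hb.zpow_right _)

theorem commute_of_commute_mul {g x y : G} (hx : PEl p x) (hy : PrEl p y) (hxy : Commute x y)
    (hg : Commute g (x * y)) : Commute g x ∧ Commute g y := by
  have h1 : Commute g x := by
    obtain ⟨k, hk⟩ := hx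
    obtain ⟨m, hm, hm'⟩ := hy
    apply commute_of_coprime_pow (hm.pow_left k)
    · rw [hk]; exact Commute.one_right g
    · have := hg.pow_right m
      rwa [hxy.mul_pow, hm', mul_one] at this
  refine ⟨h1, ?_⟩
  have := (h1.inv_right).mul_right hg
  simpa using this

theorem prel_mul_of_central (h : ∀ x : G, PEl p x → ∀ g, Commute g x) {a b : G}
    (ha : PrEl p a) (hb : PrEl p b) : PrEl p (a * b) := by
  let Z := Subgroup.center G
  have hidx : Nat.Coprime p Z.index := by
    rw [Nat.Prime.coprime_iff_not_dvd hp.out]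
    intro hd
    obtain ⟨g, hg⟩ := exists_prime_orderOf_dvd_card' (G := G ⧸ Z) p hd
    obtain ⟨g, rfl⟩ := QuotientGroup.mk_surjective g
    obtain ⟨x, y, hx, ⟨m, hm, hm'⟩, hxy, -⟩ := decomp p g
    have h1 : ((x : G) : G ⧸ Z) = 1 := (QuotientGroup.eq_one_iff x).2
      (Subgroup.mem_center_iff.2 fun g => (h x hx g).eq)
    have h2 : ((g : G) : G ⧸ Z) = (y : G ⧸ Z) := by
      rw [← hxy, QuotientGroup.mk_mul, h1, one_mul]
    have h3 : ((g : G) : G ⧸ Z) = 1 := by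
      apply one_of_PEl_PrEl (p := p)
      · refine ⟨1, ?_⟩
        rw [pow_one, ← hg, pow_orderOf_eq_one]
      · refine ⟨m, hm, ?_⟩
        rw [h2, ← QuotientGroup.mk_pow, hm', QuotientGroup.mk_one]
    rw [h3, orderOf_one] at hg
    exact hp.out.ne_one hg.symm
  have hmul : (a * b) ^ Z.index = a ^ Z.index * b ^ Z.index := by
    have := (MonoidHom.transferCenterPow G).map_mul a b
    exact congrArg Subtype.val this
  have hc : Commute (a ^ Z.index) (b ^ Z.index) :=
    (Subgroup.mem_center_iff.1 (Z.pow_index_mem b) _)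
  obtain ⟨m, hm, hm'⟩ := (ha.pow Z.index).mul (hb.pow Z.index) hc
  refine ⟨Z.index * m, hidx.mul_right hm, ?_⟩
  rw [pow_mul, hmul, hm']


def RHyp (p q : ℕ) (G : Type*) [Group G] : Prop :=
  (∀ g : G, pp p (CC g) = pp p (⊤ : Subgroup G) ∨ pp p (CC g) = q) ∧
    q < pp p (⊤ : Subgroup G) ∧ ∃ x : G, PEl p x ∧ pp p (CC x) = q

/-- The Sylow subgroup of the centralizer -/
noncomputable def PX (p : ℕ) [Fact p.Prime] {G : Type*} [Group G] [Finite G] (x : G) : Subgroup G :=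
  (exists_syl p (CC x)).choose

theorem PX_syl (x : G) : IsSyl p (CC x) (PX p x) := (exists_syl p (CC x)).choose_spec

variable {q : ℕ}

theorem RHyp.small_of_le (h : RHyp p q G) {g x : G} (hx : pp p (CC x) = q) (hgx : CC g ≤ CC x) :
    pp p (CC g) = q := by
  rcases h.1 g with h1 | h1
  · have := pp_mono (p := p) hgx
    have := h.2.1
    omega
  · exact h1

theorem CC_mul_le {x y : G} (hx : PEl p x) (hy : PrEl p y) (hxy : Commute x y) :
    CC (x * y) ≤ CC x ⊓ CC y := by
  intro g hg
  rw [mem_CC] at hg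
  have := commute_of_commute_mul hx hy hxy hg
  exact ⟨mem_CC.2 this.1, mem_CC.2 this.2⟩

theorem RHyp.c1 (h : RHyp p q G) {x : G} (hx : PEl p x) (hs : pp p (CC x) = q) :
    (∀ g ∈ CC x, cj g (PX p x) = PX p x) ∧ (∀ t ∈ CC x, PEl p t → t ∈ PX p x) ∧
      (∀ y ∈ CC x, PrEl p y → ∀ t ∈ PX p x, Commute t y) := by
  apply s1 (PX_syl x)
  intro y hy hpy
  have hxy : Commute x y := (mem_CC.1 hy).symm
  have hle := CC_mul_le hx hpy hxy
  have hs' := h.small_of_le hs (hle.trans inf_le_left)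
  obtain ⟨T, hT⟩ := exists_syl p (CC (x * y))
  refine ⟨T, hT.up (hle.trans inf_le_left) (by rw [hs, hs']), ?_⟩
  intro t ht
  exact mem_CC.1 (hle (hT.1 ht)).2

/-- p-elements and p-prime-elements in the centralizer of a small p-element commute -/
theorem RHyp.c1' (h : RHyp p q G) {x : G} (hx : PEl p x) (hs : pp p (CC x) = q) {t y : G}
    (ht : PEl p t) (htx : Commute t x) (hy : PrEl p y) (hyx : Commute y x) : Commute t y :=
  (h.c1 hx hs).2.2 y (mem_CC.2 hyx) hy t ((h.c1 hx hs).2.1 t (mem_CC.2 htx) ht)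

theorem RHyp.k (h : RHyp p q G) {x : G} (hx : PEl p x) (hs : pp p (CC x) = q) {a b : G}
    (ha : PrEl p a) (hax : Commute a x) (hb : PrEl p b) (hbx : Commute b x) : PrEl p (a * b) := by
  let L : Subgroup G := CC x ⊓ Subgroup.centralizer (PX p x)
  have hmem : ∀ y, PrEl p y → Commute y x → y ∈ L := by
    intro y hy hyx
    refine Subgroup.mem_inf.2 ⟨mem_CC.2 hyx, ?_⟩
    rw [Subgroup.mem_centralizer_iff]
    intro t ht
    exact (h.c1 hx hs).2.2 y (mem_CC.2 hyx) hy t ht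
  have key := prel_mul_of_central (G := L) (p := p) ?_ (a := ⟨a, hmem a ha hax⟩)
    (b := ⟨b, hmem b hb hbx⟩) ?_ ?_
  · obtain ⟨m, hm, hm'⟩ := key
    exact ⟨m, hm, by simpa using congrArg Subtype.val hm'⟩
  · rintro ⟨t, ht⟩ hpt ⟨g, hg⟩
    have hpt' : PEl p t := by
      obtain ⟨k, hk⟩ := hpt
      exact ⟨k, by simpa using congrArg Subtype.val hk⟩
    have htP := (h.c1 hx hs).2.1 t ht.1 hpt'
    have := Subgroup.mem_centralizer_iff.1 hg.2 t htP
    exact Subtype.ext this.symm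
  · obtain ⟨m, hm, hm'⟩ := ha
    exact ⟨m, hm, by ext; simpa using hm'⟩
  · obtain ⟨m, hm, hm'⟩ := hb
    exact ⟨m, hm, by ext; simpa using hm'⟩

end PC

set_option linter.unusedSectionVars false
set_option linter.style.haveILetI false
section PD
variable {G : Type*} [Group G] [Finite G] {p : ℕ} [hp : Fact p.Prime] {q : ℕ}

/-- center of a subgroup, as a subgroup of the big group -/
def ZS {G : Type*} [Group G] (P : Subgroup G) : Subgroup G := P ⊓ Subgroup.centralizer P

theorem mem_ZS {P : Subgroup G} {z : G} : z ∈ ZS P ↔ z ∈ P ∧ ∀ t ∈ P, Commute z t := by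
  rw [ZS, Subgroup.mem_inf, Subgroup.mem_centralizer_iff]
  exact and_congr_right fun _ => forall₂_congr fun t _ => eq_comm

theorem cj_ZS (g : G) (P : Subgroup G) : cj g (ZS P) = ZS (cj g P) := by
  ext z
  rw [mem_cj, mem_ZS, mem_ZS, mem_cj]
  refine and_congr_right fun _ => ⟨fun h t ht => ?_, fun h t ht => ?_⟩
  · have := (h _ (mem_cj.1 ht)).map (MulAut.conj g)
    simpa [mul_assoc] using this
  · have := (h _ (conj_mem_cj.2 ht)).map (MulAut.conj g⁻¹)
    simpa [mul_assoc] using this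

theorem pp_big_of {P : Subgroup G} (hP : IsSyl p (⊤ : Subgroup G) P) {z : G}
    (hz : ∀ t ∈ P, Commute t z) : pp p (CC z) = pp p (⊤ : Subgroup G) := by
  apply le_antisymm (pp_mono le_top)
  rw [← hP.2.2]
  exact card_le_pp hP.2.1 fun t ht => mem_CC.2 (hz t ht)

theorem RHyp.big_central (h : RHyp p q G) {b : G} (hb : PEl p b)
    (hbig : pp p (CC b) = pp p (⊤ : Subgroup G)) : ∀ g, Commute g b := by
  obtain ⟨x0, hx0, hs0⟩ := h.2.2
  obtain ⟨P0, hP0, hxP0⟩ := exists_syl_mem hx0 (Subgroup.mem_top x0)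
  let B : Set G := {b | PEl p b ∧ pp p (CC b) = pp p (⊤ : Subgroup G)}
  refine central_of_fix B (ZS P0) ?_ ?_ ?_ b ⟨hb, hbig⟩
  · rintro b ⟨hb, hb'⟩ g
    exact ⟨hb.conj g, by rw [← cj_CC, pp_cj, hb']⟩
  · rintro b ⟨hb, hb'⟩
    obtain ⟨P, hP, hbP, hPb⟩ := exists_syl_centralizer_of_pp hb' hb (Commute.refl b)
    obtain ⟨k, -, rfl⟩ := hP0.exists_conj_eq hP
    refine ⟨k⁻¹ * b * k, ?_, k⁻¹, by simp⟩
    have : b ∈ ZS (cj k P0) := mem_ZS.2 ⟨hbP, fun t ht => (hPb t ht).symm⟩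
    rw [← cj_ZS, mem_cj] at this
    exact this
  · intro g
    have aux : ∀ P, IsSyl p (⊤ : Subgroup G) P → (∀ z ∈ ZS P, Commute g z) →
        Nat.card (ZS P0) ≤ Nat.card {b | b ∈ B ∧ Commute g b} := by
      intro P hP hz
      obtain ⟨k, -, rfl⟩ := hP0.exists_conj_eq hP
      rw [← card_cj k, cj_ZS]
      apply Nat.card_mono (Set.toFinite _)
      intro z hz'
      have h1 := mem_ZS.1 hz'
      exact ⟨⟨pel_of_mem hP.2.1 h1.1, pp_big_of hP fun t ht => (h1.2 t ht).symm⟩, hz z hz'⟩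
    obtain ⟨x, y, hx, hy, rfl, hxy, -, -⟩ := decomp p g
    rcases h.1 x with hxb | hxs
    swap
    · obtain ⟨P, hP, hxP⟩ := exists_syl_mem hx (Subgroup.mem_top x)
      apply aux P hP
      intro z hz
      have h1 := mem_ZS.1 hz
      have h2 := h.c1' hx hxs (pel_of_mem hP.2.1 h1.1) (h1.2 x hxP) hy hxy.symm
      exact (h1.2 x hxP).symm.mul_left h2.symm
    rcases h.1 y with hyb | hys
    · obtain ⟨P, hP, hxP, hPy⟩ := exists_syl_centralizer_of_pp hyb hx hxy
      apply aux P hP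
      intro z hz
      have h1 := mem_ZS.1 hz
      exact (h1.2 x hxP).symm.mul_left (hPy z h1.1).symm
    have hle := CC_mul_le hx hy hxy
    have hgs := h.small_of_le hys (hle.trans inf_le_right)
    obtain ⟨T, hT⟩ := exists_syl p (CC (x * y))
    by_cases hsm : ∃ t ∈ T, pp p (CC t) = q
    · obtain ⟨t, ht, hts⟩ := hsm
      have htp := pel_of_mem hT.2.1 ht
      have htc := hle (hT.1 ht)
      have htx := mem_CC.1 htc.1
      have hty := mem_CC.1 htc.2
      obtain ⟨P, hP, htP, hPx⟩ := exists_syl_centralizer_of_pp hxb htp htx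
      apply aux P hP
      intro z hz
      have h1 := mem_ZS.1 hz
      have h2 := h.c1' htp hts (pel_of_mem hP.2.1 h1.1) (h1.2 t htP) hy hty.symm
      exact (hPx z h1.1).symm.mul_left h2.symm
    · push Not at hsm
      have h1 : Nat.card (ZS P0) ≤ Nat.card T := by
        rw [hT.2.2, hgs, ← hs0]
        apply card_le_pp
        · exact hP0.2.1.to_le inf_le_left
        · intro z hz
          exact mem_CC.2 ((mem_ZS.1 hz).2 x0 hxP0)
      refine h1.trans ?_
      apply Nat.card_mono (Set.toFinite _)
      intro t ht
      exact ⟨⟨pel_of_mem hT.2.1 ht, (h.1 t).resolve_right (hsm t ht)⟩, (mem_CC.1 (hT.1 ht)).symm⟩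

end PD

set_option linter.unusedSectionVars false
set_option linter.style.haveILetI false
section PE
variable {G : Type*} [Group G] [Finite G] {p : ℕ} [hp : Fact p.Prime] {q : ℕ}

theorem exists_normalizer_gt {D Q : Subgroup G} (hQ : IsPGroup p Q) (h : D < Q) :
    ∃ n ∈ Q, n ∉ D ∧ n ∈ NN D := by
  haveI : Group.IsNilpotent Q := hQ.isNilpotent
  have hnc : NormalizerCondition Q := Group.normalizerCondition_of_isNilpotent
  have hlt : D.subgroupOf Q < ⊤ := by
    rw [lt_top_iff_ne_top]
    intro h1
    exact h.not_ge (Subgroup.subgroupOf_eq_top.1 h1)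
  obtain ⟨n, hn, hn'⟩ := SetLike.exists_of_lt (hnc _ hlt)
  refine ⟨n, n.2, hn', ?_⟩
  apply mem_NN_of_le
  intro t ht
  exact (Subgroup.mem_normalizer_iff.1 hn ⟨t, h.le ht⟩).1 ht

theorem conj_pow_of {c n y : G} (h : y⁻¹ * n * y = c * n) (hc : Commute c y) (k : ℕ) :
    (y ^ k)⁻¹ * n * y ^ k = c ^ k * n := by
  induction k with
  | zero => simp
  | succ k ih =>
    have h1 : (y ^ (k + 1))⁻¹ * n * y ^ (k + 1) = y⁻¹ * ((y ^ k)⁻¹ * n * y ^ k) * y := by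
      rw [pow_succ]; group
    rw [h1, ih]
    have h2 : y⁻¹ * c ^ k = c ^ k * y⁻¹ := ((hc.pow_left k).inv_right).eq.symm
    calc y⁻¹ * (c ^ k * n) * y = (y⁻¹ * c ^ k) * n * y := by group
      _ = c ^ k * (y⁻¹ * n * y) := by rw [h2]; group
      _ = _ := by rw [h, pow_succ]; group

/-- central p-elements -/
def Zp (p : ℕ) (G : Type*) [Group G] : Subgroup G where
  carrier := {z | PEl p z ∧ ∀ g, Commute g z}
  mul_mem' := fun {a b} ha hb => ⟨ha.1.mul hb.1 (hb.2 a), fun g => (ha.2 g).mul_right (hb.2 g)⟩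
  one_mem' := ⟨PEl.one, fun g => Commute.one_right g⟩
  inv_mem' := fun {a} ha => ⟨ha.1.inv, fun g => (ha.2 g).inv_right⟩

theorem mem_Zp {z : G} : z ∈ Zp p G ↔ PEl p z ∧ ∀ g, Commute g z := Iff.rfl

theorem Zp_pgroup : IsPGroup p (Zp p G) := isPGroup_of_pel fun _ h => h.1

theorem Zp_conj {p : ℕ} {G : Type*} [Group G] {z : G} (g : G) : g * z * g⁻¹ ∈ Zp p G ↔ z ∈ Zp p G := by
  constructor
  · intro h
    have h1 := (h.2 g⁻¹).eq
    have : z = g * z * g⁻¹ := by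
      calc z = g⁻¹ * (g * z * g⁻¹) * g := by group
        _ = _ := by rw [h1]; group
    rw [this]; exact h
  · intro h
    rw [(h.2 g).eq]; simpa using h

theorem Zp_conj' {p : ℕ} {G : Type*} [Group G] {z : G} (g : G) : g⁻¹ * z * g ∈ Zp p G ↔ z ∈ Zp p G := by
  simpa using Zp_conj (p := p) (z := z) g⁻¹

theorem Zp_le_syl {H T : Subgroup G} (hZ : Zp p G ≤ H) (hT : IsSyl p H T) : Zp p G ≤ T := by
  intro z hz
  obtain ⟨k, -, hk⟩ := hT.exists_conj_mem hz.1 (hZ hz)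
  rw [mem_cj, (hz.2 k⁻¹).eq] at hk
  simpa using hk

theorem Zp_le_CC (g : G) : Zp p G ≤ CC g := fun _ hz => mem_CC.2 (hz.2 g).symm

theorem RHyp.small (h : RHyp p q G) {x : G} (hx : PEl p x) (hn : x ∉ Zp p G) :
    pp p (CC x) = q := by
  rcases h.1 x with h1 | h1
  · exact absurd ⟨hx, h.big_central hx h1⟩ hn
  · exact h1

theorem RHyp.not_Zp (h : RHyp p q G) {x : G} (hs : pp p (CC x) = q) : x ∉ Zp p G := by
  intro hx
  have : CC x = ⊤ := by
    rw [eq_top_iff]; intro g _; exact mem_CC.2 (hx.2 g)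
  have h2 := h.2.1
  rw [← hs, this] at h2
  exact lt_irrefl _ h2

theorem RHyp.card_PX (h : RHyp p q G) {x : G} (hx : PEl p x) (hn : x ∉ Zp p G) :
    Nat.card (PX p x) = q := by rw [(PX_syl x).2.2, h.small hx hn]

theorem RHyp.mem_PX (h : RHyp p q G) {x : G} (hx : PEl p x) (hn : x ∉ Zp p G) {t : G} :
    t ∈ PX p x ↔ PEl p t ∧ Commute t x :=
  ⟨fun ht => ⟨pel_of_mem (PX_syl x).2.1 ht, mem_CC.1 ((PX_syl x).1 ht)⟩,
    fun ht => (h.c1 hx (h.small hx hn)).2.1 t (mem_CC.2 ht.2) ht.1⟩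

theorem RHyp.PX_comm (h : RHyp p q G) {x : G} (hx : PEl p x) (hn : x ∉ Zp p G) {t y : G}
    (ht : t ∈ PX p x) (hy : PrEl p y) (hyx : Commute y x) : Commute t y :=
  (h.c1 hx (h.small hx hn)).2.2 y (mem_CC.2 hyx) hy t ht

theorem RHyp.eq_PX (h : RHyp p q G) {x : G} (hx : PEl p x) (hn : x ∉ Zp p G) {T : Subgroup G}
    (hT : IsSyl p (CC x) T) : T = PX p x := by
  apply eq_of_le_of_card
  · intro t ht
    exact (h.mem_PX hx hn).2 ⟨pel_of_mem hT.2.1 ht, mem_CC.1 (hT.1 ht)⟩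
  · rw [hT.2.2, (PX_syl x).2.2]

theorem RHyp.cj_PX (h : RHyp p q G) {x : G} (hx : PEl p x) (hn : x ∉ Zp p G) (k : G) :
    cj k (PX p x) = PX p (k * x * k⁻¹) := by
  apply h.eq_PX (hx.conj k) (by rwa [Zp_conj])
  rw [← cj_CC]
  exact (PX_syl x).conj k

theorem RHyp.p_mul_le (h : RHyp p q G) : p * Nat.card (Zp p G) ≤ q := by
  obtain ⟨x, hx, hs⟩ := h.2.2
  have hn := h.not_Zp hs
  refine pp_eq_of_dvd_lt (p := p) (pp_of_pgroup Zp_pgroup) hs ?_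
  rw [← h.card_PX hx hn]
  have hle : Zp p G ≤ PX p x := Zp_le_syl (Zp_le_CC x) (PX_syl x)
  refine lt_of_le_of_ne (Subgroup.card_le_of_le hle) ?_
  intro he
  have := eq_of_le_of_card hle he.ge
  exact hn (this ▸ (h.mem_PX hx hn).2 ⟨hx, Commute.refl x⟩)

theorem RHyp.Zp_lt (h : RHyp p q G) : Nat.card (Zp p G) < q := by
  have h1 := h.p_mul_le
  have h2 : 0 < Nat.card (Zp p G) := Nat.card_pos
  have := hp.out.two_le
  nlinarith

theorem RHyp.q_le (h : RHyp p q G) (g : G) : q ≤ pp p (CC g) := by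
  rcases h.1 g with h1 | h1
  · rw [h1]; exact h.2.1.le
  · rw [h1]

theorem RHyp.exists_nc (h : RHyp p q G) {T : Subgroup G} (hc : q ≤ Nat.card T) :
    ∃ t ∈ T, t ∉ Zp p G := by
  by_contra hcon
  push Not at hcon
  have := Subgroup.card_le_of_le (show T ≤ Zp p G from hcon)
  have := h.Zp_lt
  omega

theorem RHyp.ab (h : RHyp p q G) {y t : G} {Q : Subgroup G} (hQ : IsPGroup p Q) (hy : PrEl p y)
    (hyQ : y ∈ NN Q) (ht : t ∈ Q) (htn : t ∉ Zp p G) (hty : Commute t y) :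
    ∀ u ∈ Q, Commute u y := by
  by_contra hcon
  push Not at hcon
  obtain ⟨u, hu, huy⟩ := hcon
  have hlt : Q ⊓ CC y < Q := by
    refine lt_of_le_of_ne inf_le_left fun he => huy ?_
    rw [← he] at hu
    exact mem_CC.1 hu.2
  obtain ⟨n, hnQ, hnD, hn⟩ := exists_normalizer_gt hQ hlt
  have htp := pel_of_mem hQ ht
  have ht' := (conj_mem_of_NN' hn (show t ∈ Q ⊓ CC y from ⟨ht, mem_CC.2 hty⟩)).2
  have ht'' : Commute (n⁻¹ * t * n) y := mem_CC.1 ht'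
  set c := y⁻¹ * n * y * n⁻¹ with hc
  have hcQ : c ∈ Q := Q.mul_mem (conj_mem_of_NN' hyQ hnQ) (Q.inv_mem hnQ)
  have hct : Commute c t := by
    have h1 : y⁻¹ * (n⁻¹ * t * n) * y = n⁻¹ * t * n := by
      rw [mul_assoc, ht''.eq]; simp
    have h2 : y⁻¹ * t * y = t := by rw [mul_assoc, hty.eq]; simp
    have h3 : c⁻¹ * t * c = t := by
      calc c⁻¹ * t * c = n * (y⁻¹ * n⁻¹ * y) * t * (y⁻¹ * n * y) * n⁻¹ := by rw [hc]; group
        _ = n * (y⁻¹ * n⁻¹ * y) * (y⁻¹ * t * y) * (y⁻¹ * n * y) * n⁻¹ := by rw [h2]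
        _ = n * (y⁻¹ * (n⁻¹ * t * n) * y) * n⁻¹ := by group
        _ = t := by rw [h1]; group
    have h4 : c * (c⁻¹ * t * c) = c * t := by rw [h3]
    rw [Commute, SemiconjBy, ← h4]; group
  have hcp := pel_of_mem hQ hcQ
  have hcy : Commute c y := h.c1' htp (h.small htp htn) hcp hct hy hty.symm
  have hcn : y⁻¹ * n * y = c * n := by rw [hc]; group
  have hc1 : c = 1 := by
    obtain ⟨m, hm, hm'⟩ := hy
    refine one_of_PEl_PrEl hcp ⟨m, hm, ?_⟩
    have := conj_pow_of hcn hcy m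
    rw [hm'] at this
    simpa using this.symm
  rw [hc1, one_mul] at hcn
  apply hnD
  refine ⟨hnQ, mem_CC.2 ?_⟩
  have : y * (y⁻¹ * n * y) = y * n := by rw [hcn]
  rw [Commute, SemiconjBy, ← this]; group

/-- The family 𝒜 -/
def IsA (p q : ℕ) {G : Type*} [Group G] (A : Subgroup G) : Prop :=
  ∃ y : G, PrEl p y ∧ pp p (CC y) = q ∧ IsSyl p (CC y) A

theorem IsA.conj {A : Subgroup G} (hA : IsA p q A) (k : G) : IsA p q (cj k A) := by
  obtain ⟨y, hy, hs, hA⟩ := hA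
  exact ⟨k * y * k⁻¹, hy.conj k, by rw [← cj_CC, pp_cj, hs], by rw [← cj_CC]; exact hA.conj k⟩

theorem IsA.card {A : Subgroup G} (hA : IsA p q A) : Nat.card A = q := by
  obtain ⟨y, hy, hs, hA⟩ := hA
  rw [hA.2.2, hs]

theorem IsA.pgroup {A : Subgroup G} (hA : IsA p q A) : IsPGroup p A := by
  obtain ⟨y, hy, hs, hA⟩ := hA
  exact hA.2.1

theorem RHyp.PX_syl_small (h : RHyp p q G) {t y : G} (ht : PEl p t) (hn : t ∉ Zp p G)
    (hy : PrEl p y) (hs : pp p (CC y) = q) (hty : Commute t y) : IsSyl p (CC y) (PX p t) := by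
  apply isSyl_of_le_card (PX_syl t).2.1
  · intro u hu
    exact mem_CC.2 (h.PX_comm ht hn hu hy hty.symm)
  · rw [h.card_PX ht hn, hs]

theorem IsA.exists_t (h : RHyp p q G) {A : Subgroup G} (hA : IsA p q A) :
    ∃ t ∈ A, t ∉ Zp p G ∧ PEl p t ∧ A = PX p t := by
  have hcard := hA.card
  have hpg := hA.pgroup
  obtain ⟨y, hy, hs, hA⟩ := hA
  obtain ⟨t, ht, htn⟩ := h.exists_nc (T := A) hcard.ge
  have htp := pel_of_mem hpg ht
  have h1 := h.PX_syl_small htp htn hy hs (mem_CC.1 (hA.1 ht))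
  obtain ⟨k, -, hk'⟩ := h1.exists_conj_eq hA
  rw [h.cj_PX htp htn] at hk'
  have htn' : k * t * k⁻¹ ∉ Zp p G := by rwa [Zp_conj]
  refine ⟨k * t * k⁻¹, ?_, htn', htp.conj k, hk'⟩
  rw [hk', h.mem_PX (htp.conj k) htn']
  exact ⟨htp.conj k, Commute.refl _⟩

theorem RHyp.closed_of_commute (h : RHyp p q G) {t : G} (ht : PEl p t) (hn : t ∉ Zp p G)
    (hc : ∀ y : G, PrEl p y → Commute y t) (a b : G) (ha : PrEl p a) (hb : PrEl p b) :
    PrEl p (a * b) := h.k ht (h.small ht hn) ha (hc a ha) hb (hc b hb)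

theorem RHyp.no_small (h : RHyp p q G) (hno : ¬ ∃ A : Subgroup G, IsA p q A) (a b : G)
    (ha : PrEl p a) (hb : PrEl p b) : PrEl p (a * b) := by
  obtain ⟨x, hx, hs⟩ := h.2.2
  obtain ⟨T, hT⟩ := exists_syl p (⊤ : Subgroup G)
  have key := s1 hT (by
    intro y _ hy
    have hyb : pp p (CC y) = pp p (⊤ : Subgroup G) := by
      rcases h.1 y with h1 | h1
      · exact h1
      · exact absurd ⟨_, y, hy, h1, (exists_syl p (CC y)).choose_spec⟩ hno
    obtain ⟨P, hP, -, hPy⟩ := exists_syl_centralizer_of_pp hyb PEl.one (Commute.one_left y)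
    exact ⟨P, hP, hPy⟩)
  exact h.closed_of_commute hx (h.not_Zp hs) (fun y hy =>
    (key.2.2 y trivial hy x (key.2.1 x trivial hx)).symm) a b ha hb

theorem RHyp.unique_case (h : RHyp p q G) {P A : Subgroup G} (hP : IsSyl p (⊤ : Subgroup G) P)
    (hA : IsA p q A) (hAP : A ≤ P) (hu : ∀ A', IsA p q A' → A' ≤ P → A' = A) (a b : G)
    (ha : PrEl p a) (hb : PrEl p b) : PrEl p (a * b) := by
  have hnP : ∀ g ∈ P, g ∈ NN A := by
    intro g hg
    apply hu _ (hA.conj g)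
    have := cj_mono (g := g) hAP
    rwa [cj_self hg] at this
  have hconj : ∀ A', IsA p q A' → ∃ k, A' = cj k A := by
    intro A' hA'
    obtain ⟨k, -, hk⟩ := hP.exists_conj hA'.pgroup le_top
    refine ⟨k, ?_⟩
    have := hu (cj k⁻¹ A') (hA'.conj _) (by
      have := cj_mono (g := k⁻¹) hk
      rwa [cj_inv_cj] at this)
    rw [← this, cj_cj_inv]
  have hNN : ∀ k g, cj g (cj k A) = cj k A → k⁻¹ * g * k ∈ NN A := by
    intro k g hg
    rw [mem_NN, mul_assoc, ← cj_cj, ← cj_cj, hg, cj_inv_cj]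
  have key : ∀ g : G, ∃ x y k, PEl p x ∧ PrEl p y ∧ x * y = g ∧ (∀ t ∈ cj k A, Commute t y) ∧
      cj x (cj k A) = cj k A ∧ (x = 1 ∨ PrEl p g → PrEl p g) := by
    intro g
    obtain ⟨x, y, hx, hy, hxy, hc, -, -⟩ := decomp p g
    rcases h.1 y with hb | hs
    · obtain ⟨P', hP', hxP, hPy⟩ := exists_syl_centralizer_of_pp hb hx hc
      obtain ⟨k, -, rfl⟩ := hP.exists_conj_eq hP'
      refine ⟨x, y, k, hx, hy, hxy, fun t ht => hPy t (cj_mono hAP ht), ?_, ?_⟩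
      · have := hnP _ (mem_cj.1 hxP)
        rw [mem_NN] at this
        conv_rhs => rw [← this, cj_cj]
        rw [cj_cj]; congr 1; group
      · rintro (rfl | h1)
        · rw [← hxy, one_mul]; exact hy
        · exact h1
    · obtain ⟨T, hT, hxT⟩ := exists_syl_mem hx (mem_CC.2 hc)
      obtain ⟨k, rfl⟩ := hconj T ⟨y, hy, hs, hT⟩
      refine ⟨x, y, k, hx, hy, hxy, fun t ht => mem_CC.1 (hT.1 ht), cj_self hxT, ?_⟩
      rintro (rfl | h1)
      · rw [← hxy, one_mul]; exact hy
      · exact h1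
  have htop : NN A = ⊤ := by
    apply cover_top
    intro g
    obtain ⟨x, y, k, hx, hy, hxy, hcy, hcx, -⟩ := key g
    refine ⟨k, hNN k g ?_⟩
    rw [← hxy, ← cj_cj, cj_eq_of_commute hcy, hcx]
  have hall : ∀ k, cj k A = A := fun k => by
    have : k ∈ NN A := by rw [htop]; trivial
    exact this
  obtain ⟨t, ht, htn, htp, -⟩ := hA.exists_t h
  refine h.closed_of_commute htp htn (fun y hy => ?_) a b ha hb
  rcases h.1 y with hb | hs
  · obtain ⟨P', hP', -, hPy⟩ := exists_syl_centralizer_of_pp hb PEl.one (Commute.one_left y)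
    obtain ⟨k, -, rfl⟩ := hP.exists_conj_eq hP'
    apply (hPy t _).symm
    apply cj_mono hAP
    rwa [hall]
  · obtain ⟨T, hT⟩ := exists_syl p (CC y)
    obtain ⟨k, rfl⟩ := hconj T ⟨y, hy, hs, hT⟩
    rw [hall] at hT
    exact (mem_CC.1 (hT.1 ht)).symm

end PE

set_option linter.unusedSectionVars false
set_option linter.style.haveILetI false
section PF
variable {G : Type*} [Group G] [Finite G] {p : ℕ} [hp : Fact p.Prime] {q : ℕ}

theorem norm_eq_one_aux {V : Type*} [CommGroup V] (e : MulAut V) (he : e ^ p = 1)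
    (hfix : ∀ v, e v = v → v = 1) (v : V) : ∏ k ∈ Finset.range p, (e ^ k) v = 1 := by
  apply hfix
  rw [map_prod]
  have h1 := Finset.prod_range_succ (fun k => (e ^ k) v) p
  have h2 := Finset.prod_range_succ' (fun k => (e ^ k) v) p
  rw [he] at h1
  rw [h1] at h2
  have h3 : ∀ k, e ((e ^ k) v) = (e ^ (k + 1)) v := by
    intro k; rw [pow_succ']; rfl
  simp only [h3]
  simp only [pow_zero, MulAut.one_apply] at h2
  exact (mul_right_cancel h2).symm

theorem norm_lemma {V : Type*} [CommGroup V] (a b : MulAut V) (ha : a ^ p = 1) (hb : b ^ p = 1)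
    (hab : Commute a b)
    (hfix : ∀ i j, i < p → j < p → ¬ (i = 0 ∧ j = 0) → ∀ v, (a ^ i * b ^ j) v = v → v = 1)
    (v : V) : v ^ p = 1 := by
  have h1 : ∏ j ∈ Finset.range p, ∏ i ∈ Finset.range p, ((a * b ^ j) ^ i) v = 1 := by
    apply Finset.prod_eq_one
    intro j hj
    apply norm_eq_one_aux
    · rw [(hab.pow_right j).mul_pow, ha, ← pow_mul, mul_comm, pow_mul, hb]; simp
    · intro v hv
      apply hfix 1 j hp.out.one_lt (Finset.mem_range.1 hj) (by simp)
      rwa [pow_one]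
  rw [Finset.prod_comm] at h1
  rw [← Finset.prod_erase_mul _ _ (Finset.mem_range.2 hp.out.pos)] at h1
  have h2 : ∏ i ∈ (Finset.range p).erase 0, ∏ j ∈ Finset.range p, ((a * b ^ j) ^ i) v = 1 := by
    apply Finset.prod_eq_one
    intro i hi
    have hi' := Finset.mem_erase.1 hi
    have h3 := norm_eq_one_aux (p := p) (b ^ i) (by rw [← pow_mul, mul_comm, pow_mul, hb, one_pow])
      (fun v hv => hfix 0 i hp.out.pos (Finset.mem_range.1 hi'.2) (fun hh => hi'.1 hh.2) v
        (by rwa [pow_zero, one_mul])) ((a ^ i) v)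
    rw [← h3]
    apply Finset.prod_congr rfl
    intro j _
    rw [← MulAut.mul_apply, (hab.pow_right j).mul_pow, ← pow_mul, ← pow_mul,
      ((hab.pow_pow i (j * i)).eq), mul_comm i j]
  rw [h2, one_mul] at h1
  simpa using h1

/-- conjugation homomorphism -/
def NNhom (T : Subgroup G) : NN T →* MulAut T where
  toFun g :=
    { toFun := fun t => ⟨g * t * g⁻¹, conj_mem_of_NN g.2 t.2⟩
      invFun := fun t => ⟨(g : G)⁻¹ * t * g, conj_mem_of_NN' g.2 t.2⟩
      left_inv := fun t => by ext; simp [mul_assoc]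
      right_inv := fun t => by ext; simp [mul_assoc]
      map_mul' := fun s t => by ext; simp [mul_assoc] }
  map_one' := by ext; simp
  map_mul' g h := by ext; simp [mul_assoc]

theorem NNhom_apply (T : Subgroup G) (g : NN T) (t : T) : (NNhom T g t : G) = g * t * g⁻¹ := rfl

theorem NNhom_eq_one {T : Subgroup G} {g : NN T} (h : ∀ t ∈ T, Commute (g : G) t) :
    NNhom T g = 1 := by
  ext t
  rw [NNhom_apply, (h t t.2).eq]; simp

theorem normV {V : Subgroup G} (hV : ∀ v ∈ V, PrEl p v) (hc : ∀ v ∈ V, ∀ w ∈ V, Commute v w)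
    {a b : G} (ha : a ∈ NN V) (hb : b ∈ NN V) (hap : ∀ v ∈ V, Commute (a ^ p) v)
    (hbp : ∀ v ∈ V, Commute (b ^ p) v) (hab : ∀ v ∈ V, Commute (a * b * a⁻¹ * b⁻¹) v)
    (hfix : ∀ i j, i < p → j < p → ¬ (i = 0 ∧ j = 0) → ∀ v ∈ V, Commute v (a ^ i * b ^ j) →
      v = 1) : V = ⊥ := by
  letI : CommGroup V := { (inferInstance : Group V) with
    mul_comm := fun v w => Subtype.ext (hc v v.2 w w.2) }
  have key := norm_lemma (p := p) (V := V) (NNhom V ⟨a, ha⟩) (NNhom V ⟨b, hb⟩) ?_ ?_ ?_ ?_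
  · rw [eq_bot_iff]
    intro v hv
    rw [Subgroup.mem_bot]
    refine one_of_PEl_PrEl (p := p) ⟨1, ?_⟩ (hV v hv)
    rw [pow_one]
    exact congrArg Subtype.val (key ⟨v, hv⟩)
  · rw [← map_pow]; exact NNhom_eq_one hap
  · rw [← map_pow]; exact NNhom_eq_one hbp
  · have h1 : NNhom V (⟨a, ha⟩ * ⟨b, hb⟩ * ⟨a, ha⟩⁻¹ * ⟨b, hb⟩⁻¹) = 1 := NNhom_eq_one hab
    rw [map_mul, map_mul, map_mul, map_inv, map_inv] at h1
    exact mul_inv_eq_iff_eq_mul.1 (mul_inv_eq_one.1 h1)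
  · intro i j hi hj hij v hv
    rw [← map_pow, ← map_pow, ← map_mul] at hv
    have h1 := congrArg Subtype.val hv
    rw [NNhom_apply] at h1
    have h2 : (a ^ i * b ^ j) * (v : G) * (a ^ i * b ^ j)⁻¹ = v := h1
    ext
    apply hfix i j hi hj hij v v.2
    exact (mul_inv_eq_iff_eq_mul.1 h2).symm

theorem exists_inv_sylow {K A : Subgroup G} (hK : ∀ k ∈ K, PrEl p k) (hA : IsPGroup p A)
    (hAK : A ≤ NN K) (r : ℕ) [Fact r.Prime] :
    ∃ R, IsSyl r K R ∧ A ≤ NN R := by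
  letI : MulDistribMulAction A K :=
    MulDistribMulAction.compHom K ((NNhom K).comp (Subgroup.inclusion hAK))
  have hsm : ∀ (a : A) (k : K), ((a • k : K) : G) = a * k * (a : G)⁻¹ := fun a k => rfl
  have hpK : ¬ p ∣ Nat.card K := by
    intro hd
    obtain ⟨x, hx⟩ := exists_prime_orderOf_dvd_card' p hd
    have h1 : (x : G) = 1 := by
      apply one_of_PEl_PrEl (p := p) _ (hK x x.2)
      refine ⟨1, ?_⟩
      have := pow_orderOf_eq_one x
      rw [hx] at this
      simpa using congrArg Subtype.val this
    have h2 : x = 1 := Subtype.ext h1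
    rw [h2, orderOf_one] at hx
    exact hp.out.ne_one hx.symm
  have hcard : ¬ p ∣ Nat.card (Sylow r K) := by
    intro hd
    have S : Sylow r K := default
    exact hpK ((hd.trans S.card_dvd_index).trans (Subgroup.index_dvd_card _))
  obtain ⟨S, hS⟩ := hA.nonempty_fixed_point_of_prime_not_dvd_card (Sylow r K) hcard
  refine ⟨(S : Subgroup K).map K.subtype, ⟨Subgroup.map_subtype_le _, S.2.map _, ?_⟩, ?_⟩
  · rw [Subgroup.card_map_of_injective K.subtype_injective, pp]
    exact S.card_eq_multiplicity
  · intro a ha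
    apply mem_NN_of_le
    rintro _ ⟨s, hs, rfl⟩
    refine ⟨(⟨a, ha⟩ : A) • s, ?_, rfl⟩
    have h1 : (⟨a, ha⟩ : A) • S = S := hS ⟨a, ha⟩
    have h2 : (⟨a, ha⟩ : A) • s ∈ ((⟨a, ha⟩ : A) • S : Sylow r K) := by
      change _ ∈ ((⟨a, ha⟩ : A) • S : Sylow r K).toSubgroup
      rw [Sylow.pointwise_smul_def]
      exact Subgroup.smul_mem_pointwise_smul _ _ _ hs
    rw [h1] at h2
    exact h2

theorem coprime_lemma {K U A : Subgroup G} (hK : ∀ k ∈ K, PrEl p k) (hA : IsPGroup p A)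
    (hAK : A ≤ NN K) (hUK : U ≤ K) {a b : G} (ha : a ∈ A) (hb : b ∈ A)
    (hap : ∀ v ∈ K, Commute (a ^ p) v)
    (hbp : ∀ v ∈ K, Commute (b ^ p) v) (hab : ∀ v ∈ K, Commute (a * b * a⁻¹ * b⁻¹) v)
    (hU : ∀ u ∈ U, ∀ t ∈ A, Commute u t)
    (hfix : ∀ i j, i < p → j < p → ¬ (i = 0 ∧ j = 0) → ∀ v ∈ K, Commute v (a ^ i * b ^ j) →
      v ∈ U) : U = K := by
  by_contra hne
  -- a prime r with an invariant Sylow subgroup outside U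
  obtain ⟨r, hr, R, hR, hAR, hRU⟩ : ∃ r, ∃ _ : Fact r.Prime, ∃ R, IsSyl r K R ∧ A ≤ NN R ∧
      ¬ R ≤ U := by
    by_contra hcon
    push Not at hcon
    apply hne
    apply eq_of_le_of_card hUK
    apply Nat.le_of_dvd Nat.card_pos
    rw [← Nat.factorization_prime_le_iff_dvd Nat.card_pos.ne' Nat.card_pos.ne']
    intro r hr
    haveI : Fact r.Prime := ⟨hr⟩
    obtain ⟨R, hR, hAR⟩ := exists_inv_sylow hK hA hAK r
    have h1 := hcon r this R hR hAR
    have h2 := Subgroup.card_dvd_of_le h1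
    rw [hR.2.2, pp] at h2
    exact (hr.pow_dvd_iff_le_factorization Nat.card_pos.ne').1 h2
  set U0 := R ⊓ U with hU0
  have hlt : U0 < R := lt_of_le_of_ne inf_le_left fun h => hRU (inf_eq_left.1 h)
  obtain ⟨n, hnR, hnU, hnN⟩ := exists_normalizer_gt hR.2.1 hlt
  have hAU0 : A ≤ NN U0 := fun t ht =>
    cj_eq_of_commute fun u hu => hU u hu.2 t ht
  let N : Subgroup G := R ⊓ NN U0
  have hAN : ∀ t ∈ A, ∀ m ∈ N, t * m * t⁻¹ ∈ N := by
    intro t ht m hm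
    exact ⟨conj_mem_of_NN (hAR ht) hm.1, (NN U0).mul_mem ((NN U0).mul_mem (hAU0 ht) hm.2)
      ((NN U0).inv_mem (hAU0 ht))⟩
  have hnorm : (U0.subgroupOf (NN U0)).Normal := by
    constructor
    rintro ⟨u, hu⟩ hu' ⟨g, hg⟩
    exact conj_mem_of_NN (T := U0) hg (x := u) hu'
  let Q := NN U0 ⧸ U0.subgroupOf (NN U0)
  let π : NN U0 →* Q := QuotientGroup.mk' _
  have hπ : ∀ g : NN U0, π g = 1 ↔ (g : G) ∈ U0 := by
    intro g
    exact (QuotientGroup.eq_one_iff g).trans Iff.rfl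
  let N' : Subgroup Q := (N.subgroupOf (NN U0)).map π
  have hN' : ∀ x, x ∈ N' ↔ ∃ m : NN U0, (m : G) ∈ N ∧ π m = x := fun x => Iff.rfl
  have hN'r : IsPGroup r N' := by
    apply isPGroup_of_pel
    intro x hx
    obtain ⟨m, hm, rfl⟩ := (hN' x).1 hx
    obtain ⟨k, hk⟩ := pel_of_mem hR.2.1 hm.1
    refine ⟨k, ?_⟩
    rw [← map_pow, show m ^ r ^ k = 1 from Subtype.ext hk, map_one]
  let a' : Q := π ⟨a, hAU0 ha⟩
  let b' : Q := π ⟨b, hAU0 hb⟩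
  have hNN' : ∀ t (ht : t ∈ A), π ⟨t, hAU0 ht⟩ ∈ NN N' := by
    intro t ht
    apply mem_NN_of_le
    intro x hx
    obtain ⟨m, hm, rfl⟩ := (hN' x).1 hx
    exact (hN' _).2 ⟨⟨t, hAU0 ht⟩ * m * ⟨t, hAU0 ht⟩⁻¹, hAN t ht m hm, by simp⟩
  have hNNV : ∀ x ∈ NN N', x ∈ NN (ZS N') := by
    intro x hx
    rw [mem_NN, cj_ZS, hx]
  have hRK : R ≤ K := hR.1
  have hcomm : ∀ (g : G) (hg : g ∈ NN U0), (∀ v ∈ K, Commute g v) → ∀ v ∈ ZS N',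
      Commute (π ⟨g, hg⟩) v := by
    intro g hg hgK v hv
    obtain ⟨m, hm, rfl⟩ := (hN' v).1 (mem_ZS.1 hv).1
    have : Commute (⟨g, hg⟩ : NN U0) m := Subtype.ext (hgK m (hRK hm.1))
    exact this.map π
  have hV := normV (p := p) (V := ZS N') (a := a') (b := b') ?_ ?_ (hNNV _ (hNN' a ha))
    (hNNV _ (hNN' b hb)) ?_ ?_ ?_ ?_
  · -- contradiction: center of a nontrivial r-group
    have hnt : Nontrivial N' := by
      refine ⟨⟨⟨π ⟨n, hnN⟩, (hN' _).2 ⟨⟨n, hnN⟩, ⟨hnR, hnN⟩, rfl⟩⟩, 1, ?_⟩⟩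
      intro h
      exact hnU ((hπ _).1 (congrArg Subtype.val h))
    have hcn := hN'r.center_nontrivial
    obtain ⟨⟨z, hz⟩, hz1⟩ := exists_ne (1 : Subgroup.center N')
    have hzm : (z : Q) ∈ ZS N' := mem_ZS.2 ⟨z.2, fun t ht => by
      have := Subgroup.mem_center_iff.1 hz ⟨t, ht⟩
      exact (congrArg Subtype.val this).symm⟩
    rw [hV, Subgroup.mem_bot] at hzm
    apply hz1
    ext
    exact hzm
  · intro v hv
    obtain ⟨m, hm, rfl⟩ := (hN' v).1 (mem_ZS.1 hv).1
    obtain ⟨k, hk, hk'⟩ := hK m (hRK hm.1)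
    refine ⟨k, hk, ?_⟩
    rw [← map_pow, show m ^ k = 1 from Subtype.ext hk', map_one]
  · intro v hv w hw
    exact (mem_ZS.1 hv).2 w (mem_ZS.1 hw).1
  · intro v hv
    have := hcomm (a ^ p) ((NN U0).pow_mem (hAU0 ha) p) hap v hv
    exact this
  · intro v hv
    have := hcomm (b ^ p) ((NN U0).pow_mem (hAU0 hb) p) hbp v hv
    exact this
  · intro v hv
    have := hcomm (a * b * a⁻¹ * b⁻¹) (hAU0 (A.mul_mem (A.mul_mem (A.mul_mem ha hb) (A.inv_mem ha))
      (A.inv_mem hb))) hab v hv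
    exact this
  · intro i j hi hj hij v hv hcv
    obtain ⟨m, hm, rfl⟩ := (hN' v).1 (mem_ZS.1 hv).1
    rw [hπ]
    have heA : a ^ i * b ^ j ∈ A := A.mul_mem (A.pow_mem ha i) (A.pow_mem hb j)
    set e := a ^ i * b ^ j with he
    have hcv' : Commute (π m) (π ⟨e, hAU0 heA⟩) := hcv
    -- u = m⁻¹ e⁻¹ m e
    have hu : (e⁻¹ * (m : G) * e) * (m : G)⁻¹ ∈ U0 := by
      have h1 : π (⟨e, hAU0 heA⟩⁻¹ * m * ⟨e, hAU0 heA⟩ * m⁻¹) = 1 := by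
        rw [map_mul, map_mul, map_mul, map_inv, map_inv, mul_assoc (π _)⁻¹, hcv'.eq]; simp
      exact (hπ _).1 h1
    set u := (e⁻¹ * (m : G) * e) * (m : G)⁻¹ with hu'
    have hue : Commute u e := hU u hu.2 e heA
    have h3 := fun k => conj_pow_of (c := u) (n := m) (y := e) (by rw [hu']; group) hue k
    have hep : PEl p e := pel_of_mem hA heA
    have hu1 : u = 1 := by
      refine one_of_PEl_PrEl (p := p) ?_ (hK u (hUK hu.2))
      obtain ⟨k, hk⟩ := hep
      refine ⟨k, ?_⟩
      have := h3 (p ^ k)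
      rw [hk] at this
      simpa using this.symm
    refine ⟨hm.1, hfix i j hi hj hij m (hRK hm.1) ?_⟩
    have h4 := h3 1
    rw [hu1] at h4
    simp only [pow_one, one_mul] at h4
    have : e * (e⁻¹ * (m : G) * e) = e * m := by rw [h4]
    rw [← he, Commute, SemiconjBy, ← this]; group

end PF

set_option linter.unusedSectionVars false
set_option linter.style.haveILetI false
section PG
variable {G : Type*} [Group G] [Finite G] {p : ℕ} [hp : Fact p.Prime] {q : ℕ}

theorem NN_eq (T : Subgroup G) : NN T = Subgroup.normalizer T := by
  ext g
  rw [Subgroup.mem_normalizer_iff]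
  constructor
  · intro hg t
    exact (conj_mem_iff_of_NN hg).symm
  · intro hg
    exact mem_NN_of_le fun t ht => (hg t).1 ht

theorem sup_pgroup {A B : Subgroup G} (hA : IsPGroup p A) (hB : IsPGroup p B) (h : A ≤ NN B) :
    IsPGroup p (A ⊔ B : Subgroup G) :=
  IsPGroup.to_sup_of_normal_right' hA hB (by rw [← NN_eq]; exact h)

theorem IsSyl.le_of_NN {H T Q : Subgroup G} (hT : IsSyl p H T) (hQ : IsPGroup p Q) (hQH : Q ≤ H)
    (h : Q ≤ NN T) : Q ≤ T := by
  have := hT.eq_of_le (sup_pgroup hQ hT.2.1 h) (sup_le hQH hT.1) le_sup_right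
  rw [this]; exact le_sup_left

theorem IsSyl.le_of_NN' {H T Q : Subgroup G} (hT : IsSyl p H T) (hQ : IsPGroup p Q) (hQH : Q ≤ H)
    (h : T ≤ NN Q) : Q ≤ T := by
  have := hT.eq_of_le (sup_pgroup hT.2.1 hQ h) (sup_le hT.1 hQH) le_sup_left
  rw [this]; exact le_sup_right

/-- elements commuting with `x` modulo `Zp` -/
def MX (p : ℕ) {G : Type*} [Group G] (x : G) : Subgroup G where
  carrier := {g | g * x * g⁻¹ * x⁻¹ ∈ Zp p G}
  mul_mem' := fun {a b} ha hb => by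
    change a * b * x * (a * b)⁻¹ * x⁻¹ ∈ Zp p G
    have : a * b * x * (a * b)⁻¹ * x⁻¹ =
      (a * (b * x * b⁻¹ * x⁻¹) * a⁻¹) * (a * x * a⁻¹ * x⁻¹) := by group
    rw [this]
    exact mul_mem ((Zp_conj a).2 hb) ha
  one_mem' := by
    change 1 * x * 1⁻¹ * x⁻¹ ∈ Zp p G
    simp [Subgroup.one_mem]
  inv_mem' := fun {a} ha => by
    change a⁻¹ * x * a⁻¹⁻¹ * x⁻¹ ∈ Zp p G
    have : a⁻¹ * x * a⁻¹⁻¹ * x⁻¹ = a⁻¹ * (a * x * a⁻¹ * x⁻¹)⁻¹ * a := by group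
    rw [this, Zp_conj']
    exact inv_mem ha

theorem mem_MX {x g : G} : g ∈ MX p x ↔ g * x * g⁻¹ * x⁻¹ ∈ Zp p G := Iff.rfl

theorem mem_MX' {x g : G} : g ∈ MX p x ↔ ∃ z ∈ Zp p G, g * x * g⁻¹ = z * x := by
  rw [mem_MX]
  constructor
  · intro h; exact ⟨_, h, by group⟩
  · rintro ⟨z, hz, h⟩; rw [h]; simpa using hz

theorem MX_symm {x g : G} : g ∈ MX p x ↔ x ∈ MX p g := by
  rw [mem_MX, mem_MX, ← inv_mem_iff]
  have : (g * x * g⁻¹ * x⁻¹)⁻¹ = x * g * x⁻¹ * g⁻¹ := by group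
  rw [this]

theorem CC_le_MX (x : G) : CC x ≤ MX p x := by
  intro g hg
  rw [mem_MX, (mem_CC.1 hg).eq]; simp [Subgroup.one_mem]

theorem MX_conj (g x : G) : cj g (MX p x) = MX p (g * x * g⁻¹) := by
  ext t
  rw [mem_cj, mem_MX, mem_MX, ← Zp_conj g]
  have : g * (g⁻¹ * t * g * x * (g⁻¹ * t * g)⁻¹ * x⁻¹) * g⁻¹ =
    t * (g * x * g⁻¹) * t⁻¹ * (g * x * g⁻¹)⁻¹ := by group
  rw [this]

theorem MX_mul_Zp {z x : G} (hz : z ∈ Zp p G) : MX p (z * x) = MX p x := by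
  ext g
  rw [mem_MX, mem_MX]
  have h1 := (hz.2 g).eq
  have : g * (z * x) * g⁻¹ * (z * x)⁻¹ = (g * z) * x * g⁻¹ * x⁻¹ * z⁻¹ := by group
  rw [this, h1]
  have h2 : z * g * x * g⁻¹ * x⁻¹ * z⁻¹ = z * (g * x * g⁻¹ * x⁻¹) * z⁻¹ := by group
  rw [h2, Zp_conj]

/-- the commutator map is multiplicative on `MX` -/
theorem MX_map_mul {x g h : G} (hh : h ∈ MX p x) :
    (g * h) * x * (g * h)⁻¹ * x⁻¹ = (g * x * g⁻¹ * x⁻¹) * (h * x * h⁻¹ * x⁻¹) := by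
  have h1 := (hh.2 g).eq
  have h2 := (hh.2 (g * x * g⁻¹ * x⁻¹)).eq
  calc (g * h) * x * (g * h)⁻¹ * x⁻¹ = (g * (h * x * h⁻¹ * x⁻¹)) * g⁻¹ * (g * x * g⁻¹ * x⁻¹) := by
        group
    _ = (h * x * h⁻¹ * x⁻¹) * (g * x * g⁻¹ * x⁻¹) := by rw [h1]; group
    _ = _ := h2.symm

theorem MX_comm_mem {x g h : G} (hg : g ∈ MX p x) (hh : h ∈ MX p x) :
    Commute (g * h * g⁻¹ * h⁻¹) x := by
  have h8 : (g * h * g⁻¹ * h⁻¹) * x * (g * h * g⁻¹ * h⁻¹)⁻¹ * x⁻¹ = 1 := by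
    have e1 := MX_map_mul (p := p) (x := x) (g := g * h * g⁻¹) (h := h⁻¹) (inv_mem hh)
    have e2 := MX_map_mul (p := p) (x := x) (g := g * h) (h := g⁻¹) (inv_mem hg)
    have e3 := MX_map_mul (p := p) (x := x) (g := g) (h := h) hh
    have e4 := MX_map_mul (p := p) (x := x) (g := g) (h := g⁻¹) (inv_mem hg)
    have e5 := MX_map_mul (p := p) (x := x) (g := h) (h := h⁻¹) (inv_mem hh)
    have c1 := (hh.2 (g⁻¹ * x * g⁻¹⁻¹ * x⁻¹)).eq
    rw [e1, e2, e3, mul_assoc (g * x * g⁻¹ * x⁻¹), ← c1, ← mul_assoc (g * x * g⁻¹ * x⁻¹), ← e4,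
      mul_assoc, ← e5]
    simp
  exact mul_inv_eq_iff_eq_mul.1 (mul_inv_eq_one.1 h8)

theorem MX_pow {x g : G} (hg : g ∈ MX p x) (n : ℕ) :
    g ^ n * x * (g ^ n)⁻¹ * x⁻¹ = (g * x * g⁻¹ * x⁻¹) ^ n := by
  induction n with
  | zero => simp
  | succ n ih => rw [pow_succ, MX_map_mul hg, ih, pow_succ]

theorem MX_pow_right {x g : G} (hg : g ∈ MX p x) (n : ℕ) :
    g * x ^ n * g⁻¹ = (g * x * g⁻¹ * x⁻¹) ^ n * x ^ n := by
  rw [← conj_pow]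
  have : g * x * g⁻¹ = (g * x * g⁻¹ * x⁻¹) * x := by group
  rw [this, Commute.mul_pow (hg.2 x).symm]; simp

theorem MX_pow_comm {x g : G} (hg : g ∈ MX p x) (hx : x ^ p ∈ Zp p G) : Commute (g ^ p) x := by
  have h1 := MX_pow hg p
  have h2 := MX_pow_right hg p
  rw [(hx.2 g).eq] at h2
  have h3 : (g * x * g⁻¹ * x⁻¹) ^ p = 1 := by simpa using h2.symm
  rw [h3] at h1
  exact mul_inv_eq_iff_eq_mul.1 (mul_inv_eq_one.1 h1)

theorem exists_w {P : Subgroup G} (hP : IsPGroup p P) (hZ : Zp p G < P) :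
    ∃ w ∈ P, w ∉ Zp p G ∧ w ^ p ∈ Zp p G ∧ P ≤ MX p w := by
  haveI : ((Zp p G).subgroupOf P).Normal := by
    constructor
    rintro ⟨z, hz⟩ hz' ⟨g, hg⟩
    exact (Zp_conj (p := p) g).2 hz'
  let Q := P ⧸ (Zp p G).subgroupOf P
  have hQ : IsPGroup p Q := hP.to_quotient _
  have hm : ∀ g : P, ((g : Q) = 1) ↔ (g : G) ∈ Zp p G := fun g =>
    (QuotientGroup.eq_one_iff g).trans Iff.rfl
  haveI : Nontrivial Q := by
    obtain ⟨g, hg, hg'⟩ := SetLike.exists_of_lt hZ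
    exact ⟨⟨((⟨g, hg⟩ : P) : Q), 1, fun h => hg' ((hm _).1 h)⟩⟩
  have := hQ.center_nontrivial
  have hC : IsPGroup p (Subgroup.center Q) := hQ.to_subgroup _
  obtain ⟨n, hn, hn'⟩ := (IsPGroup.nontrivial_iff_card hC).1 this
  obtain ⟨z, hz⟩ := exists_prime_orderOf_dvd_card' (G := Subgroup.center Q) p
    (by rw [hn']; exact dvd_pow_self p hn.ne')
  obtain ⟨⟨w, hw⟩, hwz⟩ := QuotientGroup.mk_surjective (z : Q)
  refine ⟨w, hw, ?_, ?_, ?_⟩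
  · intro h
    have h1 : z = 1 := by
      ext; rw [← hwz]; exact (hm ⟨w, hw⟩).2 h
    rw [h1, orderOf_one] at hz
    exact hp.out.ne_one hz.symm
  · have h1 : z ^ p = 1 := by have := pow_orderOf_eq_one z; rwa [hz] at this
    have h2 : (((⟨w, hw⟩ : P) ^ p : P) : Q) = 1 := by
      rw [QuotientGroup.mk_pow, hwz]
      exact congrArg Subtype.val h1
    exact (hm _).1 h2
  · intro g hg
    have h1 := Subgroup.mem_center_iff.1 z.2 ((⟨g, hg⟩ : P) : Q)
    rw [← hwz] at h1
    have h2 : ((⟨g, hg⟩ * ⟨w, hw⟩ * ⟨g, hg⟩⁻¹ * ⟨w, hw⟩⁻¹ : P) : Q) = 1 := by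
      rw [QuotientGroup.mk_mul, QuotientGroup.mk_mul, QuotientGroup.mk_mul, h1,
        QuotientGroup.mk_inv, QuotientGroup.mk_inv]; simp
    exact (hm _).1 h2

end PG

set_option linter.unusedSectionVars false
set_option linter.style.haveILetI false
section PH
variable {G : Type*} [Group G] [Finite G] {p : ℕ} [hp : Fact p.Prime] {q : ℕ}

theorem mem_of_pow_mem {H : Subgroup G} {x : G} {i : ℕ} (h1 : x ^ p ∈ H) (h2 : x ^ i ∈ H)
    (hi : 0 < i) (hip : i < p) : x ∈ H := by
  have hc : Nat.Coprime i p := ((Nat.Prime.coprime_iff_not_dvd hp.out).2 (Nat.not_dvd_of_pos_of_lt hi hip)).symm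
  have hb := Nat.gcd_eq_gcd_ab i p
  rw [hc] at hb
  have : x = (x ^ i) ^ (Nat.gcdA i p) * (x ^ p) ^ (Nat.gcdB i p) := by
    rw [← zpow_natCast, ← zpow_natCast, ← zpow_mul, ← zpow_mul, ← zpow_add, ← hb]; simp
  rw [this]
  exact mul_mem (zpow_mem h2 _) (zpow_mem h1 _)

theorem Zp_mem_pow {x : G} {i : ℕ} (h1 : x ^ p ∈ Zp p G) (hx : x ∉ Zp p G) (h2 : x ^ i ∈ Zp p G) :
    p ∣ i := by
  by_contra hcon
  apply hx
  have h3 : x ^ (i % p) ∈ Zp p G := by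
    have : x ^ (i % p) = ((x ^ p) ^ (i / p))⁻¹ * x ^ i := by
      conv_rhs => rw [← Nat.div_add_mod i p]
      rw [← pow_mul, pow_add]
      rw [Nat.mul_add_div hp.out.pos, Nat.div_eq_of_lt (Nat.mod_lt _ hp.out.pos)]
      simp
    rw [this]
    exact mul_mem (inv_mem (pow_mem h1 _)) h2
  refine mem_of_pow_mem h1 h3 ?_ (Nat.mod_lt _ hp.out.pos)
  exact Nat.pos_of_ne_zero fun h => hcon (Nat.dvd_of_mod_eq_zero h)

instance Zp_normal : (Zp p G).Normal := ⟨fun _ hn g => (Zp_conj g).2 hn⟩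

/-- `⟨a⟩ Zp` -/
def AZ (p : ℕ) {G : Type*} [Group G] (a : G) : Subgroup G := Subgroup.zpowers a ⊔ Zp p G

theorem AZ_self (a : G) : a ∈ AZ p a := Subgroup.mem_sup_left (Subgroup.mem_zpowers a)
theorem Zp_le_AZ (a : G) : Zp p G ≤ AZ p a := le_sup_right

theorem mem_AZ {a g : G} (ha : a ^ p ∈ Zp p G) :
    g ∈ AZ p a ↔ ∃ n : ℕ, n < p ∧ ∃ z ∈ Zp p G, g = a ^ n * z := by
  constructor
  · intro hg
    rw [AZ, Subgroup.mem_sup_of_normal_right] at hg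
    obtain ⟨b, hb, z, hz, rfl⟩ := hg
    obtain ⟨k, rfl⟩ := Subgroup.mem_zpowers_iff.1 hb
    have hp0 : (0 : ℤ) < p := by exact_mod_cast hp.out.pos
    have h1 := Int.emod_nonneg k hp0.ne'
    have h2 := Int.emod_lt_of_pos k hp0
    obtain ⟨n, hn⟩ := Int.eq_ofNat_of_zero_le h1
    refine ⟨n, by omega, (a ^ p) ^ (k / p) * z, mul_mem (zpow_mem ha _) hz, ?_⟩
    conv_lhs => rw [← Int.emod_add_mul_ediv k p, zpow_add, zpow_mul, hn]
    simp [mul_assoc]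
  · rintro ⟨n, -, z, hz, rfl⟩
    exact mul_mem (pow_mem (AZ_self a) n) (Zp_le_AZ a hz)

theorem card_AZ_le {a : G} (ha : a ^ p ∈ Zp p G) : Nat.card (AZ p a) ≤ p * Nat.card (Zp p G) := by
  let f : Fin p × Zp p G → AZ p a := fun x => ⟨a ^ (x.1 : ℕ) * x.2,
    mul_mem (pow_mem (AZ_self a) _) (Zp_le_AZ a x.2.2)⟩
  have hf : Function.Surjective f := by
    rintro ⟨g, hg⟩
    obtain ⟨n, hn, z, hz, rfl⟩ := (mem_AZ ha).1 hg
    exact ⟨(⟨n, hn⟩, ⟨z, hz⟩), rfl⟩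
  have := Nat.card_le_card_of_surjective f hf
  simpa [Nat.card_prod] using this

theorem AZ_le {a : G} {H : Subgroup G} (ha : a ∈ H) (hZ : Zp p G ≤ H) : AZ p a ≤ H :=
  sup_le (by rwa [Subgroup.zpowers_le]) hZ

theorem PEl.mul_Zp {x z : G} (hx : PEl p x) (hz : z ∈ Zp p G) : PEl p (z * x) :=
  hz.1.mul hx (hz.2 x).symm

theorem mul_Zp_iff {x z : G} (hz : z ∈ Zp p G) : z * x ∈ Zp p G ↔ x ∈ Zp p G :=
  Subgroup.mul_mem_cancel_left _ hz

theorem RHyp.PX_mul_Zp (h : RHyp p q G) {x z : G} (hx : PEl p x) (hn : x ∉ Zp p G)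
    (hz : z ∈ Zp p G) : PX p (z * x) = PX p x := by
  ext t
  rw [h.mem_PX (hx.mul_Zp hz) (by rwa [mul_Zp_iff hz]), h.mem_PX hx hn]
  refine and_congr Iff.rfl ⟨fun h1 => ?_, fun h1 => (hz.2 t).mul_right h1⟩
  have := (hz.2 t).inv_right.mul_right h1
  simpa using this

theorem RHyp.MX_le_NN (h : RHyp p q G) {x : G} (hx : PEl p x) (hn : x ∉ Zp p G) :
    MX p x ≤ NN (PX p x) := by
  intro g hg
  obtain ⟨z, hz, he⟩ := mem_MX'.1 hg
  rw [mem_NN, h.cj_PX hx hn, he, h.PX_mul_Zp hx hn hz]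

theorem RHyp.self_mem_PX (h : RHyp p q G) {x : G} (hx : PEl p x) (hn : x ∉ Zp p G) : x ∈ PX p x :=
  (h.mem_PX hx hn).2 ⟨hx, Commute.refl x⟩

theorem RHyp.Zp_le_PX (h : RHyp p q G) {x : G} (hx : PEl p x) (hn : x ∉ Zp p G) :
    Zp p G ≤ PX p x := fun _ hz => (h.mem_PX hx hn).2 ⟨hz.1, (hz.2 x).symm⟩

/-- the basic data -/
structure WD (p : ℕ) {G : Type*} [Group G] (P : Subgroup G) (w : G) : Prop where
  syl : IsSyl p (⊤ : Subgroup G) P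
  mem : w ∈ P
  nZ : w ∉ Zp p G
  pow : w ^ p ∈ Zp p G
  le : P ≤ MX p w

variable {P : Subgroup G} {w : G}

theorem WD.pel (d : WD p P w) : PEl p w := pel_of_mem d.syl.2.1 d.mem

theorem WD.NNW (d : WD p P w) (h : RHyp p q G) : P ≤ NN (PX p w) :=
  d.le.trans (h.MX_le_NN d.pel d.nZ)

theorem WD.W_le (d : WD p P w) (h : RHyp p q G) : PX p w ≤ P :=
  d.syl.le_of_NN' (PX_syl w).2.1 le_top (d.NNW h)

theorem WD.comm (d : WD p P w) (h : RHyp p q G) {a b : G} (ha : a ∈ P) (hb : b ∈ P) :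
    a * b * a⁻¹ * b⁻¹ ∈ PX p w :=
  (h.mem_PX d.pel d.nZ).2 ⟨pel_of_mem d.syl.2.1
    (mul_mem (mul_mem (mul_mem ha hb) (inv_mem ha)) (inv_mem hb)), MX_comm_mem (d.le ha) (d.le hb)⟩

theorem WD.powW (d : WD p P w) (h : RHyp p q G) {a : G} (ha : a ∈ P) :
    a ^ p ∈ PX p w :=
  (h.mem_PX d.pel d.nZ).2 ⟨(pel_of_mem d.syl.2.1 ha).pow p, MX_pow_comm (d.le ha) d.pow⟩

theorem WD.A_eq (d : WD p P w) (h : RHyp p q G) {A : Subgroup G} (hA : IsA p q A) (hAP : A ≤ P)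
    {a : G} (ha : a ∈ A) (haW : a ∈ PX p w) (hn : a ∉ Zp p G) : A = PX p w := by
  obtain ⟨y, hy, hs, hAy⟩ := hA
  have hpa := pel_of_mem hAy.2.1 ha
  have h1 := h.PX_syl_small hpa hn hy hs (mem_CC.1 (hAy.1 ha))
  have h2 : w ∈ PX p a := (h.mem_PX hpa hn).2 ⟨d.pel, (((h.mem_PX d.pel d.nZ).1 haW).2).symm⟩
  have h3 := h.PX_syl_small d.pel d.nZ hy hs (mem_CC.1 (h1.1 h2))
  have h4 := h3.le_of_NN hAy.2.1 hAy.1 (hAP.trans (d.NNW h))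
  exact eq_of_le_of_card h4 (by rw [hAy.2.2, h3.2.2])

theorem WD.exists_pair (d : WD p P w) (h : RHyp p q G) {A A' : Subgroup G} (hA : IsA p q A)
    (hAP : A ≤ P) (hA' : IsA p q A') (hAP' : A' ≤ P) (hne : A' ≠ A) :
    ∃ A₁ A₂ : Subgroup G, IsA p q A₁ ∧ A₁ ≤ P ∧ IsA p q A₂ ∧ A₂ ≤ P ∧ A₁ ≠ A₂ ∧ A₂ ≤ NN A₁ ∧
      A₂ ≠ PX p w := by
  by_cases h1 : P ≤ NN A
  · by_cases h2 : A' = PX p w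
    · exact ⟨A', A, hA', hAP', hA, hAP, hne, by rw [h2]; exact hAP.trans (d.NNW h),
        fun h3 => hne (h2.trans h3.symm)⟩
    · exact ⟨A, A', hA, hAP, hA', hAP', hne.symm, hAP'.trans h1, h2⟩
  · have hlt : P ⊓ NN A < P := inf_lt_left.2 h1
    obtain ⟨s, hs, hsD, hsN⟩ := exists_normalizer_gt d.syl.2.1 hlt
    have hsA : s ∉ NN A := fun h2 => hsD ⟨hs, h2⟩
    have hle : cj s A ≤ P ⊓ NN A := by
      rw [← mem_NN.1 hsN]; exact cj_mono (le_inf hAP (le_NN A))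
    refine ⟨A, cj s A, hA, hAP, hA.conj s, hle.trans inf_le_left, fun h2 => hsA h2.symm,
      hle.trans inf_le_right, fun h2 => hsA ?_⟩
    have h3 : A = PX p w := by
      rw [← cj_inv_cj s A, h2]; exact inv_mem (d.NNW h hs)
    rw [h3]; exact d.NNW h hs

theorem WD.q_eq (d : WD p P w) (h : RHyp p q G) {A A' : Subgroup G} (hA : IsA p q A)
    (hAP : A ≤ P) (hA' : IsA p q A') (hAP' : A' ≤ P) (hne : A' ≠ A) :
    q = p * Nat.card (Zp p G) := by
  obtain ⟨A₁, A₂, hA₁, hP₁, hA₂, hP₂, hne, hN, hW⟩ := d.exists_pair h hA hAP hA' hAP' hne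
  have hAW : ∀ a ∈ A₂, a ∈ PX p w → a ∈ Zp p G := by
    intro a ha haW
    by_contra hcon
    exact hW (d.A_eq h hA₂ hP₂ ha haW hcon)
  refine le_antisymm ?_ h.p_mul_le
  by_contra hlt
  rw [not_le] at hlt
  obtain ⟨t₁, ht₁, hn₁, hp₁, he₁⟩ := hA₁.exists_t h
  obtain ⟨t₂, ht₂, hn₂, hp₂, he₂⟩ := hA₂.exists_t h
  have hpow : t₂ ^ p ∈ Zp p G := hAW _ (pow_mem ht₂ _) (d.powW h (hP₂ ht₂))
  obtain ⟨b, hb, hbn⟩ : ∃ b ∈ A₂, b ∉ AZ p t₂ := by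
    by_contra hcon
    push Not at hcon
    have := Subgroup.card_le_of_le (show A₂ ≤ AZ p t₂ from hcon)
    rw [hA₂.card] at this
    have := card_AZ_le hpow
    omega
  let K : Subgroup G :=
    { carrier := {y | PrEl p y ∧ Commute y t₁}
      mul_mem' := fun {a b} ha hb =>
        ⟨h.k hp₁ (h.small hp₁ hn₁) ha.1 ha.2 hb.1 hb.2, ha.2.mul_left hb.2⟩
      one_mem' := ⟨PrEl.one, Commute.one_left _⟩
      inv_mem' := fun {a} ha => ⟨ha.1.inv, ha.2.inv_left⟩ }
  let U : Subgroup G := K ⊓ Subgroup.centralizer A₂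
  have hKN : A₂ ≤ NN K := by
    intro s hs
    apply mem_NN_of_le
    intro y hy
    refine ⟨hy.1.conj s, ?_⟩
    have h1 : s⁻¹ * t₁ * s ∈ PX p t₁ := by
      rw [← he₁]; exact conj_mem_of_NN' (hN hs) ht₁
    have h2 := h.PX_comm hp₁ hn₁ h1 hy.1 hy.2
    have h3 := (Commute.conj_iff s).2 h2.symm
    simpa [mul_assoc] using h3
  have hbp : b ^ p ∈ Zp p G := hAW _ (pow_mem hb _) (d.powW h (hP₂ hb))
  have hcomm : t₂ * b * t₂⁻¹ * b⁻¹ ∈ Zp p G :=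
    hAW _ (mul_mem (mul_mem (mul_mem ht₂ hb) (inv_mem ht₂)) (inv_mem hb))
      (d.comm h (hP₂ ht₂) (hP₂ hb))
  have hUK : U = K := by
    apply coprime_lemma (p := p) (K := K) (A := A₂) (U := U) (a := t₂) (b := b)
    · exact fun k hk => hk.1
    · exact hA₂.pgroup
    · exact hKN
    · exact inf_le_left
    · exact ht₂
    · exact hb
    · exact fun k _ => by first | exact hpow.2 k | exact (hpow.2 k).symm
    · exact fun k _ => by first | exact hbp.2 k | exact (hbp.2 k).symm
    · exact fun k _ => by first | exact hcomm.2 k | exact (hcomm.2 k).symm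
    · intro u hu t ht
      exact (Subgroup.mem_centralizer_iff.1 hu.2 t ht).symm
    · intro i j hi hj hij v hv hvc
      have hc : t₂ ^ i * b ^ j ∈ A₂ := mul_mem (pow_mem ht₂ _) (pow_mem hb _)
      have hcn : t₂ ^ i * b ^ j ∉ Zp p G := by
        intro hz
        by_cases hj0 : j = 0
        · subst hj0
          have hi0 : i ≠ 0 := fun h0 => hij ⟨h0, rfl⟩
          exact hn₂ (mem_of_pow_mem hpow (by simpa using hz) (Nat.pos_of_ne_zero hi0) hi)
        · apply hbn
          refine mem_of_pow_mem (Zp_le_AZ _ hbp) ?_ (Nat.pos_of_ne_zero hj0) hj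
          exact (Subgroup.mul_mem_cancel_left _ (pow_mem (AZ_self t₂) i)).1 (Zp_le_AZ _ hz)
      have hcp := pel_of_mem hA₂.pgroup hc
      refine ⟨hv, ?_⟩
      have h1 : t₂ ∈ PX p (t₂ ^ i * b ^ j) := by
        rw [h.mem_PX hcp hcn]
        refine ⟨hp₂, ?_⟩
        rw [he₂, h.mem_PX hp₂ hn₂] at hc
        exact hc.2.symm
      have h2 := h.PX_comm hcp hcn h1 hv.1 hvc
      refine Subgroup.mem_centralizer_iff.2 fun t ht => ?_
      rw [SetLike.mem_coe, he₂] at ht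
      exact h.PX_comm hp₂ hn₂ ht hv.1 h2.symm
  obtain ⟨y, hy, hs, hAy⟩ := hA₁
  have hyU : y ∈ U := by
    rw [hUK]; exact ⟨hy, (mem_CC.1 (hAy.1 ht₁)).symm⟩
  have h5 : A₂ ≤ CC y := fun t ht => mem_CC.2 (Subgroup.mem_centralizer_iff.1 hyU.2 t ht)
  have h6 := hAy.le_of_NN hA₂.pgroup h5 hN
  exact hne (eq_of_le_of_card h6 (by rw [hA₂.card, hAy.2.2, hs])).symm

theorem RHyp.AZ_eq (h : RHyp p q G) (hq : q = p * Nat.card (Zp p G)) {x : G} (hx : PEl p x)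
    (hn : x ∉ Zp p G) : PX p x = AZ p x := by
  have hle := AZ_le (h.self_mem_PX hx hn) (h.Zp_le_PX hx hn)
  symm
  apply eq_of_le_of_card hle
  rw [h.card_PX hx hn, hq]
  have hpg : IsPGroup p (AZ p x) := (PX_syl x).2.1.to_le hle
  apply pp_eq_of_dvd_lt (pp_of_pgroup Zp_pgroup) (pp_of_pgroup hpg)
  refine lt_of_le_of_ne (Subgroup.card_le_of_le (Zp_le_AZ x)) fun he => hn ?_
  rw [eq_of_le_of_card (Zp_le_AZ x) he.ge]; exact AZ_self x

theorem RHyp.pow_p (h : RHyp p q G) (hq : q = p * Nat.card (Zp p G)) {x : G} (hx : PEl p x) :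
    x ^ p ∈ Zp p G := by
  by_cases hn : x ∈ Zp p G
  · exact pow_mem hn _
  have h1 := ((Zp p G).subgroupOf (PX p x)).pow_index_mem ⟨x, h.self_mem_PX hx hn⟩
  have h2 : ((Zp p G).subgroupOf (PX p x)).index = p := by
    have h3 := ((Zp p G).subgroupOf (PX p x)).card_mul_index
    rw [h.card_PX hx hn, Nat.card_congr (Subgroup.subgroupOfEquivOfLe (h.Zp_le_PX hx hn)).toEquiv,
      hq, mul_comm] at h3
    exact Nat.eq_of_mul_eq_mul_right Nat.card_pos h3
  rw [h2] at h1
  exact h1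

end PH

set_option linter.unusedSectionVars false
set_option linter.style.haveILetI false
section PI
variable {G : Type*} [Group G] [Finite G] {p : ℕ} [hp : Fact p.Prime] {q : ℕ}

theorem card_le_mul_of_fiber {α β : Type*} [Finite α] [Finite β] (f : α → β) (n : ℕ)
    (hf : ∀ a : α, Nat.card {x // f x = f a} ≤ n) : Nat.card α ≤ n * Nat.card β := by
  classical
  haveI := Fintype.ofFinite α
  haveI := Fintype.ofFinite β
  have h1 := Finset.card_le_mul_card_image (s := (Finset.univ : Finset α)) (f := f) n (by
    intro b hb
    obtain ⟨a, -, rfl⟩ := Finset.mem_image.1 hb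
    have := hf a
    rwa [Nat.card_eq_fintype_card, Fintype.card_subtype] at this)
  rw [Nat.card_eq_fintype_card, Nat.card_eq_fintype_card]
  exact h1.trans (Nat.mul_le_mul_left _ (Finset.card_le_univ _))

theorem RHyp.class_count.{u} {G : Type u} [Group G] [Finite G] (h : RHyp p q G) :
    ∃ (O : Type u) (_ : Finite O) (f : O → G),
    (∀ o, PEl p (f o)) ∧ (∀ o, f o ∉ Zp p G) ∧ (∀ o o' g, f o = g * f o' * g⁻¹ → o = o') ∧
      q + 1 ≤ Nat.card O + Nat.card (Zp p G) := by
  classical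
  let X : Set G := {x | PEl p x}
  have hX : ∀ b ∈ X, ∀ g : G, g * b * g⁻¹ ∈ X := fun b hb g => hb.conj g
  letI := conjSub X hX
  have hsm : ∀ (g : G) (b : X), ((g • b : X) : G) = g * b * g⁻¹ := fun g b => rfl
  haveI := Fintype.ofFinite G
  have hb := burnside_count G X
  let Q := Quotient (MulAction.orbitRel G X)
  have hfix : ∀ g : G, ∀ T : Subgroup G, IsSyl p (CC g) T →
      Nat.card T ≤ Nat.card (MulAction.fixedBy X g) := by
    intro g T hT
    apply Nat.card_le_card_of_injective (fun t : T =>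
      (⟨⟨t, pel_of_mem hT.2.1 t.2⟩, by
        apply Subtype.ext
        rw [hsm]
        exact mul_inv_eq_iff_eq_mul.2 (mem_CC.1 (hT.1 t.2)).symm.eq⟩ : MulAction.fixedBy X g))
    intro a b hab
    apply Subtype.ext
    exact congrArg (fun z : MulAction.fixedBy X g => ((z : X) : G)) hab
  have hlt : q * Nat.card G < ∑ g : G, Nat.card (MulAction.fixedBy X g) := by
    have : q * Nat.card G = ∑ g : G, q := by
      simp [Nat.card_eq_fintype_card, mul_comm]
    rw [this]
    apply Finset.sum_lt_sum
    · intro g _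
      obtain ⟨T, hT⟩ := exists_syl p (CC g)
      exact (h.q_le g).trans (hT.2.2 ▸ hfix g T hT)
    · refine ⟨1, Finset.mem_univ _, ?_⟩
      obtain ⟨T, hT⟩ := exists_syl p (CC (1 : G))
      have h1 : CC (1 : G) = ⊤ := by
        rw [eq_top_iff]; intro g _; exact mem_CC.2 (Commute.one_right g)
      refine lt_of_lt_of_le ?_ (hfix 1 T hT)
      rw [hT.2.2, h1]; exact h.2.1
  rw [hb] at hlt
  have hκ : q < Nat.card Q := lt_of_mul_lt_mul_right hlt (Nat.zero_le _)
  refine ⟨{o : Q // ((o.out : X) : G) ∉ Zp p G}, inferInstance, fun o => ((o.1.out : X) : G),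
    fun o => (o.1.out).2, fun o => o.2, ?_, ?_⟩
  · intro o o' g hg
    apply Subtype.ext
    rw [← Quotient.out_eq o.1, ← Quotient.out_eq o'.1]
    apply Quotient.sound
    exact ⟨g, Subtype.ext hg.symm⟩
  · have h1 : Nat.card {o : Q // ((o.out : X) : G) ∈ Zp p G} ≤ Nat.card (Zp p G) := by
      apply Nat.card_le_card_of_injective (fun o => (⟨_, o.2⟩ : Zp p G))
      intro a b hab
      apply Subtype.ext
      have h2 : (a.1.out : X) = b.1.out := Subtype.ext (congrArg (fun z : Zp p G => (z : G)) hab)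
      rw [← Quotient.out_eq a.1, ← Quotient.out_eq b.1, h2]
    have h2 : Nat.card Q = Nat.card {o : Q // ((o.out : X) : G) ∈ Zp p G} +
        Nat.card {o : Q // ((o.out : X) : G) ∉ Zp p G} := by
      rw [← Nat.card_sum]
      exact Nat.card_congr (Equiv.sumCompl (fun o : Q => ((o.out : X) : G) ∈ Zp p G)).symm
    omega

theorem IsSyl.mem_of_NN {P : Subgroup G} (hP : IsSyl p (⊤ : Subgroup G) P) {a : G} (ha : PEl p a)
    (haN : a ∈ NN P) : a ∈ P :=
  hP.le_of_NN (isPGroup_zpowers ha) le_top ((Subgroup.zpowers_le).2 haN) (Subgroup.mem_zpowers a)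

theorem zpowers_le_of {H : Subgroup G} {x g : G} (hg : g ∈ H) (hx : x ∈ Subgroup.zpowers g) : x ∈ H :=
  (Subgroup.zpowers_le.2 hg) hx

theorem RHyp.e_aux (h : RHyp p q G) {P : Subgroup G} (hP : IsSyl p (⊤ : Subgroup G) P) {y x k : G}
    (hy : PrEl p y) (hyN : y ∈ NN P) (hx : x ∈ P) (hn : x ∉ Zp p G) (hk : k ∈ P)
    (he : y * x * y⁻¹ = k * x * k⁻¹) : ∀ u ∈ P, Commute u y := by
  obtain ⟨a, b, ha, hb, hab, hcab, haz, hbz⟩ := decomp p (k⁻¹ * y)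
  have hN : k⁻¹ * y ∈ NN P := mul_mem (inv_mem (le_NN P hk)) hyN
  have hc : Commute x (k⁻¹ * y) := by
    have h1 : k⁻¹ * (y * x * y⁻¹) * y = k⁻¹ * (k * x * k⁻¹) * y := by rw [he]
    have h2 : k⁻¹ * y * x = x * (k⁻¹ * y) := by
      calc k⁻¹ * y * x = k⁻¹ * (y * x * y⁻¹) * y := by group
        _ = _ := by rw [h1]; group
    exact h2.symm
  have hxb : Commute x b := commute_of_mem_zpowers hbz hc
  have hbP := h.ab hP.2.1 hb (zpowers_le_of hN hbz) hx hn hxb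
  have haP : a ∈ P := hP.mem_of_NN ha (zpowers_le_of hN haz)
  have hkaP : k * a ∈ P := mul_mem hk haP
  have hyb : y = (k * a) * b := by rw [mul_assoc, hab]; group
  have h1 : Commute (k * a) b := hbP _ hkaP
  have h2 : Commute y b := by rw [hyb]; exact h1.mul_left (Commute.refl b)
  have h3 : PrEl p (k * a) := by
    have : k * a = y * b⁻¹ := by rw [hyb]; group
    rw [this]; exact hy.mul hb.inv h2.inv_right
  have h4 := one_of_PEl_PrEl (pel_of_mem hP.2.1 hkaP) h3
  rw [h4, one_mul] at hyb
  rw [hyb]; exact hbP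

/-- elements of order prime to `p` normalizing a Sylow subgroup centralize it -/
theorem RHyp.e (h : RHyp p q G) (hq : q = p * Nat.card (Zp p G)) {P : Subgroup G}
    (hP : IsSyl p (⊤ : Subgroup G) P) {y : G} (hy : PrEl p y) (hyN : y ∈ NN P) :
    ∀ u ∈ P, Commute u y := by
  by_contra hcon
  have key : ∀ x k, x ∈ P → x ∉ Zp p G → k ∈ P → y * x * y⁻¹ ≠ k * x * k⁻¹ :=
    fun x k hx hn hk he => hcon (h.e_aux hP hy hyN hx hn hk he)
  obtain ⟨O, hO, f, hf1, hf2, hf3, hcard⟩ := h.class_count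
  have hrep : ∀ o, ∃ x ∈ P, x ∉ Zp p G ∧ ∃ g, f o = g * x * g⁻¹ := by
    intro o
    obtain ⟨k, -, hk⟩ := hP.exists_conj_mem (hf1 o) (Subgroup.mem_top _)
    refine ⟨_, mem_cj.1 hk, ?_, k, by group⟩
    rw [Zp_conj']; exact hf2 o
  choose x hxP hxn c hc using hrep
  let X : O → Bool → G := fun o b => if b then x o else y * x o * y⁻¹
  have hXP : ∀ o b, X o b ∈ P := by
    intro o b
    cases b
    · exact conj_mem_of_NN hyN (hxP o)
    · exact hxP o
  have hXn : ∀ o b, X o b ∉ Zp p G := by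
    intro o b
    cases b
    · change y * x o * y⁻¹ ∉ _
      rw [Zp_conj]; exact hxn o
    · exact hxn o
  have hXc : ∀ o b, ∃ g, X o b = g * x o * g⁻¹ := by
    intro o b
    cases b
    · exact ⟨y, rfl⟩
    · exact ⟨1, by simp [X]⟩
  have hdet : ∀ o b o' b' k k', k ∈ P → k' ∈ P → k * X o b * k⁻¹ = k' * X o' b' * k'⁻¹ →
      o = o' ∧ b = b' := by
    intro o b o' b' k k' hk hk' he
    have ho : o = o' := by
      obtain ⟨g, hg⟩ := hXc o b
      obtain ⟨g', hg'⟩ := hXc o' b'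
      rw [hg, hg'] at he
      apply hf3 o o' (c o * (g⁻¹ * k⁻¹ * k' * g') * (c o')⁻¹)
      rw [hc o, hc o']
      have h1 : x o = (k * g)⁻¹ * (k * (g * x o * g⁻¹) * k⁻¹) * (k * g) := by group
      rw [h1, he]; group
    subst ho
    refine ⟨rfl, ?_⟩
    by_contra hb
    have : ∃ k ∈ P, y * x o * y⁻¹ = k * x o * k⁻¹ := by
      cases b <;> cases b'
      · exact absurd rfl hb
      · change k * (y * x o * y⁻¹) * k⁻¹ = k' * x o * k'⁻¹ at he
        refine ⟨k⁻¹ * k', mul_mem (inv_mem hk) hk', ?_⟩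
        calc y * x o * y⁻¹ = k⁻¹ * (k * (y * x o * y⁻¹) * k⁻¹) * k := by group
          _ = _ := by rw [he]; group
      · change k * x o * k⁻¹ = k' * (y * x o * y⁻¹) * k'⁻¹ at he
        refine ⟨k'⁻¹ * k, mul_mem (inv_mem hk') hk, ?_⟩
        calc y * x o * y⁻¹ = k'⁻¹ * (k' * (y * x o * y⁻¹) * k'⁻¹) * k' := by group
          _ = _ := by rw [← he]; group
      · exact absurd rfl hb
    obtain ⟨k, hk, h1⟩ := this
    exact key _ k (hxP o) (hxn o) hk h1
  let F : O × Bool × P → P := fun a => ⟨a.2.2 * X a.1 a.2.1 * (a.2.2 : G)⁻¹,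
    mul_mem (mul_mem a.2.2.2 (hXP _ _)) (inv_mem a.2.2.2)⟩
  have hmain := card_le_mul_of_fiber F q (by
    rintro ⟨o, b, k, hk⟩
    have hpx := pel_of_mem hP.2.1 (hXP o b)
    rw [← h.card_PX hpx (hXn o b)]
    have hval : ∀ a : {a // F a = F (o, b, ⟨k, hk⟩)},
        (a.1.2.2 : G) * X a.1.1 a.1.2.1 * (a.1.2.2 : G)⁻¹ = k * X o b * k⁻¹ :=
      fun a => congrArg Subtype.val a.2
    apply Nat.card_le_card_of_injective (fun a => (⟨k⁻¹ * (a.1.2.2 : G), by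
      rw [h.mem_PX hpx (hXn o b)]
      refine ⟨pel_of_mem hP.2.1 (mul_mem (inv_mem hk) a.1.2.2.2), ?_⟩
      have h1 := hval a
      obtain ⟨h2, h3⟩ := hdet _ _ _ _ _ _ a.1.2.2.2 hk h1
      rw [h2, h3] at h1
      have : k⁻¹ * (a.1.2.2 : G) * X o b = X o b * (k⁻¹ * (a.1.2.2 : G)) := by
        calc k⁻¹ * (a.1.2.2 : G) * X o b
            = k⁻¹ * ((a.1.2.2 : G) * X o b * (a.1.2.2 : G)⁻¹) * (a.1.2.2 : G) := by group
          _ = _ := by rw [h1]; group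
      exact this⟩ : PX p (X o b)))
    intro a a' haa
    have h0 : k⁻¹ * (a.1.2.2 : G) = k⁻¹ * (a'.1.2.2 : G) := congrArg Subtype.val haa
    have h1 := mul_left_cancel h0
    obtain ⟨h2, h3⟩ := hdet _ _ _ _ _ _ a.1.2.2.2 hk (hval a)
    obtain ⟨h4, h5⟩ := hdet _ _ _ _ _ _ a'.1.2.2.2 hk (hval a')
    apply Subtype.ext
    apply Prod.ext (h2.trans h4.symm)
    exact Prod.ext (h3.trans h5.symm) (Subtype.ext h1))
  rw [Nat.card_prod, Nat.card_prod] at hmain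
  have hb : Nat.card Bool = 2 := by simp
  rw [hb] at hmain
  have hN : 0 < Nat.card P := Nat.card_pos
  have h1 : 2 * Nat.card O ≤ q := by
    have : (2 * Nat.card O) * Nat.card P ≤ q * Nat.card P := by nlinarith
    exact le_of_mul_le_mul_right this hN
  have h2 : 2 * Nat.card (Zp p G) ≤ q := by
    rw [hq]; exact Nat.mul_le_mul_right _ hp.out.two_le
  omega

/-- the normalizer of a Sylow subgroup -/
theorem RHyp.NN_decomp (h : RHyp p q G) (hq : q = p * Nat.card (Zp p G)) {P : Subgroup G}
    (hP : IsSyl p (⊤ : Subgroup G) P) {g : G} (hg : g ∈ NN P) :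
    ∃ k ∈ P, ∃ y, PrEl p y ∧ g = k * y ∧ ∀ u ∈ P, Commute u y := by
  obtain ⟨a, b, ha, hb, hab, -, haz, hbz⟩ := decomp p g
  exact ⟨a, hP.mem_of_NN ha (zpowers_le_of hg haz), b, hb, hab.symm,
    h.e hq hP hb (zpowers_le_of hg hbz)⟩

end PI

set_option linter.unusedSectionVars false
set_option linter.style.haveILetI false
section PJ
variable {G : Type*} [Group G] [Finite G] {p : ℕ} [hp : Fact p.Prime] {q : ℕ}

theorem MX_prel {x y : G} (hy : PrEl p y) (hm : y ∈ MX p x) : Commute y x := by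
  obtain ⟨m, hm1, hm2⟩ := hy
  have h1 := MX_pow hm m
  rw [hm2] at h1
  have h2 : PrEl p (y * x * y⁻¹ * x⁻¹) := ⟨m, hm1, by rw [← h1]; simp⟩
  have h3 := one_of_PEl_PrEl hm.1 h2
  exact mul_inv_eq_iff_eq_mul.1 (mul_inv_eq_one.1 h3)

theorem Zp_le_MX (g : G) : Zp p G ≤ MX p g := (Zp_le_CC g).trans (CC_le_MX g)

theorem MX_of_mem_AZ {g w a : G} (hg : g ∈ MX p w) (ha : a ∈ AZ p w) : g ∈ MX p a :=
  MX_symm.2 (AZ_le (MX_symm.1 hg) (Zp_le_MX g) ha)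

theorem RHyp.AZ_eq_of_mem (h : RHyp p q G) (hq : q = p * Nat.card (Zp p G)) {v c : G}
    (hv : PEl p v) (hvn : v ∉ Zp p G) (hc : c ∈ PX p v) (hcn : c ∉ Zp p G) :
    PX p c = PX p v := by
  have hcp := ((h.mem_PX hv hvn).1 hc).1
  rw [h.AZ_eq hq hcp hcn]
  apply eq_of_le_of_card (AZ_le hc (h.Zp_le_PX hv hvn))
  rw [h.card_PX hv hvn, ← h.AZ_eq hq hcp hcn, h.card_PX hcp hcn]

variable {P : Subgroup G} {w : G}

theorem WD.mem_MX_of_NNP (d : WD p P w) (h : RHyp p q G) (hq : q = p * Nat.card (Zp p G)) {g : G}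
    (hg : g ∈ NN P) : g ∈ MX p w := by
  obtain ⟨k, hk, y, hy, rfl, hyP⟩ := h.NN_decomp hq d.syl hg
  exact mul_mem (d.le hk) (CC_le_MX w (mem_CC.2 (hyP w d.mem).symm))

theorem IsSyl.frattini {M P : Subgroup G} (hP : IsSyl p M P) {g : G} (hg : cj g P ≤ M) :
    ∃ m ∈ M, m⁻¹ * g ∈ NN P := by
  obtain ⟨m, hm, he⟩ := hP.exists_conj (isPGroup_cj hP.2.1 g) hg
  refine ⟨m, hm, ?_⟩
  rw [mem_NN, ← cj_cj, eq_of_le_of_card he (by rw [card_cj, card_cj]), cj_inv_cj]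

theorem WD.sylMX (d : WD p P w) : IsSyl p (MX p w) P := d.syl.down le_top d.le

theorem WD.NNW_le (d : WD p P w) (h : RHyp p q G) (hq : q = p * Nat.card (Zp p G)) {g : G}
    (hg : g ∈ NN (PX p w)) : g ∈ MX p w := by
  have h1 : g * w * g⁻¹ ∈ AZ p w := by
    rw [← h.AZ_eq hq d.pel d.nZ]
    exact conj_mem_of_NN hg (h.self_mem_PX d.pel d.nZ)
  have h2 : MX p w ≤ cj g (MX p w) := by
    rw [MX_conj]; exact fun k hk => MX_of_mem_AZ hk h1
  have h3 := eq_of_le_of_card h2 (by rw [card_cj])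
  obtain ⟨m, hm, h4⟩ := d.sylMX.frattini (g := g) (by rw [h3]; exact cj_mono d.le)
  have := mul_mem hm (d.mem_MX_of_NNP h hq h4)
  simpa using this

theorem WD.MX_decomp (d : WD p P w) (h : RHyp p q G) {g : G} (hg : g ∈ MX p w) :
    ∃ y, PrEl p y ∧ Commute y w ∧ ∃ k ∈ P, g = y * k := by
  obtain ⟨a, b, ha, hb, hab, hcab, haz, hbz⟩ := decomp p g
  have haM := zpowers_le_of hg haz
  have hbM := zpowers_le_of hg hbz
  obtain ⟨m, hm, hma⟩ := d.sylMX.exists_conj_mem ha haM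
  rw [mem_cj] at hma
  have hbc := MX_prel hb hbM
  -- `b * a * a'⁻¹` centralizes `w`
  have hc : (b * (a * (m⁻¹ * a * m)⁻¹)) ∈ CC w := by
    refine mul_mem (mem_CC.2 hbc) (mem_CC.2 ?_)
    have : a * (m⁻¹ * a * m)⁻¹ = a * m⁻¹ * a⁻¹ * m⁻¹⁻¹ := by group
    rw [this]
    exact MX_comm_mem haM (inv_mem hm)
  obtain ⟨t, y, ht, hy, hty, hcty, htz, hyz⟩ := decomp p (b * (a * (m⁻¹ * a * m)⁻¹))
  have htW : t ∈ PX p w := (h.mem_PX d.pel d.nZ).2 ⟨ht, mem_CC.1 (zpowers_le_of hc htz)⟩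
  refine ⟨y, hy, mem_CC.1 (zpowers_le_of hc hyz), t * (m⁻¹ * a * m),
    mul_mem (d.W_le h htW) hma, ?_⟩
  rw [← mul_assoc, ← hcty.eq, hty, ← hab, hcab.eq]; group

theorem WD.fus (d : WD p P w) (h : RHyp p q G) {g x : G}
    (hg : g ∈ MX p w) (hx : x ∈ P) (hgx : g * x * g⁻¹ ∈ P) : g * x * g⁻¹ * x⁻¹ ∈ PX p w := by
  obtain ⟨y, hy, hyw, k, hk, rfl⟩ := d.MX_decomp h hg
  have hx' : k * x * k⁻¹ ∈ P := mul_mem (mul_mem hk hx) (inv_mem hk)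
  have h0 : y * k * x * (y * k)⁻¹ = y * (k * x * k⁻¹) * y⁻¹ := by group
  rw [h0] at hgx ⊢
  have h1 : y * (k * x * k⁻¹) * y⁻¹ * (k * x * k⁻¹)⁻¹ = 1 := by
    apply one_of_PEl_PrEl (p := p)
    · exact pel_of_mem d.syl.2.1 (mul_mem hgx (inv_mem hx'))
    · have : y * (k * x * k⁻¹) * y⁻¹ * (k * x * k⁻¹)⁻¹ =
        y * ((k * x * k⁻¹) * y⁻¹ * (k * x * k⁻¹)⁻¹) := by group
      rw [this]
      refine h.k d.pel (h.small d.pel d.nZ) hy hyw (hy.inv.conj _) ?_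
      apply MX_prel (hy.inv.conj _)
      have hyM : y⁻¹ ∈ MX p w := inv_mem (CC_le_MX w (mem_CC.2 hyw))
      exact mul_mem (mul_mem (d.le hx') hyM) (inv_mem (d.le hx'))
  rw [mul_inv_eq_one.1 h1]
  exact d.comm h hk hx

theorem conj_pow_aux {H : Type*} [Group H] {u v c : H} (h1 : u * v * u⁻¹ = c * v)
    (h2 : u * c * u⁻¹ = c) (n : ℕ) : u ^ n * v * (u ^ n)⁻¹ = c ^ n * v := by
  induction n with
  | zero => simp
  | succ n ih =>
    have e : u ^ (n + 1) * v * (u ^ (n + 1))⁻¹ = u * (u ^ n * v * (u ^ n)⁻¹) * u⁻¹ := by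
      rw [pow_succ']; group
    have e2 : u * c ^ n * u⁻¹ = c ^ n := by rw [← conj_pow, h2]
    rw [e, ih]
    calc u * (c ^ n * v) * u⁻¹ = (u * c ^ n * u⁻¹) * (u * v * u⁻¹) := by group
      _ = c ^ (n + 1) * v := by rw [e2, h1, pow_succ]; group

/-- the quotient map -/
abbrev PiZ (p : ℕ) (G : Type*) [Group G] [Finite G] [Fact p.Prime] : G →* G ⧸ Zp p G :=
  QuotientGroup.mk' (Zp p G)

theorem PiZ_one {x : G} : PiZ p G x = 1 ↔ x ∈ Zp p G := QuotientGroup.eq_one_iff x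

theorem PiZ_MX {x g : G} : g ∈ MX p x ↔ PiZ p G g * PiZ p G x * (PiZ p G g)⁻¹ = PiZ p G x := by
  rw [mem_MX, ← PiZ_one, ← mul_inv_eq_one (a := PiZ p G g * PiZ p G x * (PiZ p G g)⁻¹)]
  simp only [map_mul, map_inv]

theorem PiZ_AZ {x a : G} {n : ℤ} (h : PiZ p G a = PiZ p G x ^ n) : a ∈ AZ p x := by
  have h1 : (x ^ n)⁻¹ * a ∈ Zp p G := by
    rw [← PiZ_one, map_mul, h, map_inv, map_zpow]; simp
  have : a = x ^ n * ((x ^ n)⁻¹ * a) := by group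
  rw [this]
  exact mul_mem (zpow_mem (AZ_self x) n) (Zp_le_AZ x h1)

theorem sl2_aux {H : Type*} [Group H] {a b x y : H} (hab : a * b = b * a)
    (h1 : x * a * x⁻¹ = a) (h2 : x * b * x⁻¹ = a * b) (h3 : y * b * y⁻¹ = b)
    (h4 : y * a * y⁻¹ = b⁻¹ * a) :
    (x * y * x) * (x * y * x) * a * ((x * y * x) * (x * y * x))⁻¹ = a⁻¹ := by
  have s1 : (x * y * x) * a * (x * y * x)⁻¹ = b⁻¹ := by
    calc (x * y * x) * a * (x * y * x)⁻¹ = x * (y * (x * a * x⁻¹) * y⁻¹) * x⁻¹ := by group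
      _ = x * (b⁻¹ * a) * x⁻¹ := by rw [h1, h4]
      _ = (x * b * x⁻¹)⁻¹ * (x * a * x⁻¹) := by group
      _ = _ := by rw [h1, h2]; group
  have s2 : (x * y * x) * b * (x * y * x)⁻¹ = a := by
    calc (x * y * x) * b * (x * y * x)⁻¹ = x * (y * (x * b * x⁻¹) * y⁻¹) * x⁻¹ := by group
      _ = x * ((y * a * y⁻¹) * (y * b * y⁻¹)) * x⁻¹ := by rw [h2]; group
      _ = (x * b * x⁻¹)⁻¹ * (x * a * x⁻¹) * (x * b * x⁻¹) := by rw [h3, h4]; group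
      _ = b⁻¹ * a * b := by rw [h1, h2]; group
      _ = _ := by rw [mul_assoc, hab]; group
  calc (x * y * x) * (x * y * x) * a * ((x * y * x) * (x * y * x))⁻¹
      = (x * y * x) * ((x * y * x) * a * (x * y * x)⁻¹) * (x * y * x)⁻¹ := by group
    _ = ((x * y * x) * b * (x * y * x)⁻¹)⁻¹ := by rw [s1]; group
    _ = _ := by rw [s2]

theorem WD.mem_W_of (d : WD p P w) (h : RHyp p q G) (hq : q = p * Nat.card (Zp p G)) {s x v : G}
    (hs : s ∈ P) (hx : x ∈ P) (hsx : s ∉ MX p x) (hv : v ∈ P) (hvP : P ≤ MX p v) :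
    v ∈ PX p w := by
  by_cases hvn : v ∈ Zp p G
  · exact h.Zp_le_PX d.pel d.nZ hvn
  have hvp := pel_of_mem d.syl.2.1 hv
  have d' : WD p P v := ⟨d.syl, hv, hvn, h.pow_p hq hvp, hvP⟩
  have h1 := h.AZ_eq_of_mem hq d.pel d.nZ (d.comm h hs hx) hsx
  have h2 := h.AZ_eq_of_mem hq hvp hvn (d'.comm h hs hx) hsx
  rw [← h1, h2]
  exact h.self_mem_PX hvp hvn

theorem WD.exists_u (d : WD p P w) (h : RHyp p q G) (hq : q = p * Nat.card (Zp p G)) {s x v : G}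
    (hs : s ∈ P) (hx : x ∈ P) (hsx : s ∉ MX p x) (hv : v ∈ P) (hvW : v ∉ PX p w) :
    ∃ u ∈ P, PiZ p G u * PiZ p G v * (PiZ p G u)⁻¹ = PiZ p G w * PiZ p G v := by
  have h1 : ¬ P ≤ MX p v := fun hc => hvW (d.mem_W_of h hq hs hx hsx hv hc)
  obtain ⟨u, hu, huv⟩ := SetLike.not_le_iff_exists.1 h1
  have h2 := d.comm h hu hv
  rw [h.AZ_eq hq d.pel d.nZ, mem_AZ d.pow] at h2
  obtain ⟨a, ha, z, hz, he⟩ := h2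
  have ha0 : a ≠ 0 := by
    rintro rfl
    apply huv
    rw [mem_MX, he]; simpa using hz
  have hcop : Nat.Coprime a p :=
    ((Nat.Prime.coprime_iff_not_dvd hp.out).2
      (Nat.not_dvd_of_pos_of_lt (Nat.pos_of_ne_zero ha0) ha)).symm
  obtain ⟨n, hn⟩ := Nat.exists_mul_mod_eq_one_of_coprime hcop hp.out.one_lt
  refine ⟨u ^ n, pow_mem hu n, ?_⟩
  have h3 : PiZ p G u * PiZ p G v * (PiZ p G u)⁻¹ = PiZ p G w ^ a * PiZ p G v := by
    have : u * v * u⁻¹ = w ^ a * z * v := by rw [← he]; group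
    have h4 := congrArg (PiZ p G) this
    simpa [map_mul, map_inv, map_pow, PiZ_one.2 hz] using h4
  have h4 : PiZ p G u * (PiZ p G w ^ a) * (PiZ p G u)⁻¹ = PiZ p G w ^ a := by
    rw [← conj_pow, PiZ_MX.1 (d.le hu)]
  have h5 := conj_pow_aux h3 h4 n
  have h6 : PiZ p G w ^ p = 1 := by rw [← map_pow]; exact PiZ_one.2 d.pow
  rw [map_pow, h5, ← pow_mul, pow_eq_pow_mod _ h6, hn.2, pow_one]

theorem WD.claim (d : WD p P w) (h : RHyp p q G) (hq : q = p * Nat.card (Zp p G)) {s x g : G}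
    (hp2 : p ≠ 2)
    (hs : s ∈ P) (hx : x ∈ P) (hsx : s ∉ MX p x) (h1 : g * w * g⁻¹ ∈ P) (h2 : g⁻¹ * w * g ∈ P) :
    g ∈ NN (PX p w) := by
  by_contra hg
  have key : ∀ k : G, k ∉ NN (PX p w) → k * w * k⁻¹ ∉ PX p w := by
    intro k hk hkw
    apply hk
    rw [mem_NN, h.cj_PX d.pel d.nZ]
    exact h.AZ_eq_of_mem hq d.pel d.nZ hkw (by rw [Zp_conj]; exact d.nZ)
  have hw1 := key g hg
  have hw2 := key g⁻¹ (fun h3 => hg (by simpa using inv_mem h3))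
  rw [inv_inv] at hw2
  obtain ⟨a, ha, hae⟩ := d.exists_u h hq hs hx hsx h1 hw1
  obtain ⟨u, hu, hue⟩ := d.exists_u h hq hs hx hsx h2 hw2
  have huw := PiZ_MX.1 (d.le hu)
  have haw := PiZ_MX.1 (d.le ha)
  have hww := PiZ_MX.1 (MX_symm.1 (d.le h1))
  have e := sl2_aux (a := PiZ p G w) (b := PiZ p G (g * w * g⁻¹)) (x := PiZ p G a)
    (y := PiZ p G (g * u⁻¹ * g⁻¹)) (mul_inv_eq_iff_eq_mul.1 hww) haw hae ?_ ?_
  · let t := (a * (g * u⁻¹ * g⁻¹) * a) * (a * (g * u⁻¹ * g⁻¹) * a)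
    have e' : PiZ p G (t * w * t⁻¹) = (PiZ p G w)⁻¹ := by
      rw [← e]; simp only [t, map_mul, map_inv]
    have htW : t * w * t⁻¹ ∈ PX p w := by
      rw [h.AZ_eq hq d.pel d.nZ]
      exact PiZ_AZ (n := -1) (by rw [e']; simp)
    have htN : t ∈ NN (PX p w) := by
      by_contra hc; exact key t hc htW
    have htM := PiZ_MX.1 (d.NNW_le h hq htN)
    rw [← map_inv, ← map_mul, ← map_mul, e'] at htM
    have h5 : w ^ 2 ∈ Zp p G := by
      rw [← PiZ_one, map_pow, pow_two]
      nth_rewrite 1 [← htM]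
      simp
    have h6 := Zp_mem_pow d.pow d.nZ h5
    exact hp2 ((Nat.prime_dvd_prime_iff_eq hp.out Nat.prime_two).1 h6)
  · have : (PiZ p G u)⁻¹ * PiZ p G w * PiZ p G u = PiZ p G w := by
      conv_lhs => rw [← huw]
      group
    simp only [map_mul, map_inv]
    calc PiZ p G g * (PiZ p G u)⁻¹ * (PiZ p G g)⁻¹ * (PiZ p G g * PiZ p G w * (PiZ p G g)⁻¹) *
          (PiZ p G g * (PiZ p G u)⁻¹ * (PiZ p G g)⁻¹)⁻¹
        = PiZ p G g * ((PiZ p G u)⁻¹ * PiZ p G w * PiZ p G u) * (PiZ p G g)⁻¹ := by group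
      _ = _ := by rw [this]
  · have h7 : (PiZ p G u)⁻¹ * PiZ p G w * PiZ p G u = PiZ p G w := by
      conv_lhs => rw [← huw]
      group
    have h8 : (PiZ p G u)⁻¹ * PiZ p G (g⁻¹ * w * g) * PiZ p G u =
        (PiZ p G w)⁻¹ * PiZ p G (g⁻¹ * w * g) := by
      have : PiZ p G (g⁻¹ * w * g) = (PiZ p G w)⁻¹ *
        (PiZ p G u * PiZ p G (g⁻¹ * w * g) * (PiZ p G u)⁻¹) := by rw [hue]; group
      conv_lhs => rw [this]
      calc _ = ((PiZ p G u)⁻¹ * PiZ p G w * PiZ p G u)⁻¹ * PiZ p G (g⁻¹ * w * g) := by group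
        _ = _ := by rw [h7]
    simp only [map_mul, map_inv] at h8 ⊢
    calc PiZ p G g * (PiZ p G u)⁻¹ * (PiZ p G g)⁻¹ * PiZ p G w *
          (PiZ p G g * (PiZ p G u)⁻¹ * (PiZ p G g)⁻¹)⁻¹
        = PiZ p G g * ((PiZ p G u)⁻¹ * ((PiZ p G g)⁻¹ * PiZ p G w * PiZ p G g) * PiZ p G u) *
          (PiZ p G g)⁻¹ := by group
      _ = _ := by rw [h8]; group

theorem RHyp.comm_of_two (h : RHyp p q G) (hq : q = p * Nat.card (Zp p G)) (hp2 : p = 2)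
    (hP : IsPGroup p P) {a b : G} (ha : a ∈ P) (hb : b ∈ P) : a ∈ MX p b := by
  have key : ∀ x ∈ P, PiZ p G x * PiZ p G x = 1 := by
    intro x hx
    have := h.pow_p hq (pel_of_mem hP hx)
    rw [← PiZ_one, map_pow] at this
    rw [← pow_two]
    have e : PiZ p G x ^ 2 = PiZ p G x ^ p := by congr 1; exact hp2.symm
    rw [e, this]
  have h1 := key a ha
  have h2 := key b hb
  have h3 := key _ (mul_mem ha hb)
  rw [PiZ_MX]
  rw [map_mul] at h3
  have h4 := inv_eq_of_mul_eq_one_right h1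
  have h5 := inv_eq_of_mul_eq_one_right h2
  rw [h4, ← mul_inv_eq_one, h5]
  rw [← h3]; group

/-- `w` is weakly closed -/
theorem WD.weak (d : WD p P w) (h : RHyp p q G) (hq : q = p * Nat.card (Zp p G)) {g : G}
    (hg : g * w * g⁻¹ ∈ P) : g ∈ MX p w := by
  by_cases hc : P ≤ MX p (g * w * g⁻¹)
  · have hsyl : IsSyl p (MX p (g * w * g⁻¹)) P := d.syl.down le_top hc
    obtain ⟨m, hm, hmg⟩ := hsyl.frattini (g := g) (by rw [← MX_conj]; exact cj_mono d.le)
    have h1 := PiZ_MX.1 (d.mem_MX_of_NNP h hq hmg)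
    have h2 := PiZ_MX.1 hm
    rw [PiZ_MX]
    simp only [map_mul, map_inv] at h1 h2 ⊢
    conv_rhs => rw [← h1]
    have h3 := mul_inv_eq_iff_eq_mul.1 h2
    calc PiZ p G g * PiZ p G w * (PiZ p G g)⁻¹ = (PiZ p G m)⁻¹ *
          (PiZ p G m * (PiZ p G g * PiZ p G w * (PiZ p G g)⁻¹)) := by group
      _ = _ := by rw [h3]; group
  · obtain ⟨s, hs, hsx⟩ := SetLike.not_le_iff_exists.1 hc
    have hp2 : p ≠ 2 := fun h2 => hsx (h.comm_of_two hq h2 d.syl.2.1 hs hg)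
    have hsyl : IsSyl p (MX p (g * w * g⁻¹)) (cj g P) := by
      rw [← MX_conj]; exact d.sylMX.conj g
    obtain ⟨m, hm, hle⟩ := hsyl.exists_conj (Q := P ⊓ MX p (g * w * g⁻¹))
      (d.syl.2.1.to_le inf_le_left) inf_le_right
    obtain ⟨z, hz, hmz⟩ := mem_MX'.1 hm
    have e1 : m * g * w * (m * g)⁻¹ = z * (g * w * g⁻¹) := by rw [← hmz]; group
    have h1 : m * g ∈ NN (PX p w) := by
      apply d.claim h hq hp2 hs hg hsx
      · rw [e1]
        exact mul_mem (Zp_le_syl le_top d.syl hz) hg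
      · have : w ∈ cj m (cj g P) := hle ⟨d.mem, MX_symm.1 (d.le hg)⟩
        rw [cj_cj, mem_cj] at this
        exact this
    have h2 := d.NNW_le h hq h1
    have h3 : g * w * g⁻¹ ∈ PX p w := by
      have h4 := conj_mem_of_NN h1 (h.self_mem_PX d.pel d.nZ)
      rw [e1] at h4
      exact (Subgroup.mul_mem_cancel_left _ (h.Zp_le_PX d.pel d.nZ hz)).1 h4
    apply d.NNW_le h hq
    rw [mem_NN, h.cj_PX d.pel d.nZ]
    exact h.AZ_eq_of_mem hq d.pel d.nZ h3 (by rw [Zp_conj]; exact d.nZ)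

theorem WD.F (d : WD p P w) (h : RHyp p q G) (hq : q = p * Nat.card (Zp p G)) {g x : G}
    (hx : x ∈ P) (hgx : g * x * g⁻¹ ∈ P) : g * x * g⁻¹ * x⁻¹ ∈ PX p w := by
  have hw1 : w ∈ MX p (g * x * g⁻¹) := MX_symm.1 (d.le hgx)
  have hw2 : g * w * g⁻¹ ∈ MX p (g * x * g⁻¹) := by
    rw [← MX_conj, conj_mem_cj]; exact MX_symm.1 (d.le hx)
  obtain ⟨S, hS, hwS⟩ := exists_syl_mem d.pel hw1
  obtain ⟨m, hm, hmS⟩ := hS.exists_conj_mem (d.pel.conj g) hw2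
  obtain ⟨k, -, hk⟩ := d.syl.exists_conj hS.2.1 le_top
  have h1 : k ∈ MX p w := by
    have h2 := mem_cj.1 (hk hwS)
    have h3 := d.weak h hq (g := k⁻¹) (by simpa using h2)
    simpa using inv_mem h3
  have h2 : m⁻¹ * g ∈ MX p w := by
    have h2 := mem_cj.1 (hk (mem_cj.1 hmS))
    have h3 := d.weak h hq (g := k⁻¹ * m⁻¹ * g) (by
      convert h2 using 1; group)
    have h4 := mul_mem h1 h3
    convert h4 using 1; group
  obtain ⟨z, hz, hmz⟩ := mem_MX'.1 (inv_mem hm)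
  have e1 : m⁻¹ * g * x * (m⁻¹ * g)⁻¹ = z * (g * x * g⁻¹) := by rw [← hmz]; group
  have h3 := d.fus h h2 hx (by rw [e1]; exact mul_mem (Zp_le_syl le_top d.syl hz) hgx)
  rw [e1, mul_assoc] at h3
  exact (Subgroup.mul_mem_cancel_left _ (h.Zp_le_PX d.pel d.nZ hz)).1 h3

end PJ

set_option linter.unusedSectionVars false
set_option linter.style.haveILetI false
section PK
variable {G : Type*} [Group G] [Finite G] {p : ℕ} [hp : Fact p.Prime] {q : ℕ}
variable {P : Subgroup G} {w : G}

theorem prel_map {H K : Type*} [Group H] [Group K] (f : H →* K) {x : H} (hx : PrEl p x) :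
    PrEl p (f x) := by
  obtain ⟨m, h1, h2⟩ := hx
  exact ⟨m, h1, by rw [← map_pow, h2, map_one]⟩

theorem prel_ker {H K : Type*} [Group H] [Group K] [Finite K] (hK : IsPGroup p K) (f : H →* K)
    {x : H} (hx : PrEl p x) : x ∈ f.ker :=
  MonoidHom.mem_ker.2 (one_of_PEl_PrEl (hK (f x)) (prel_map f hx))

theorem burnside_closed {N F : Subgroup G} (hF : IsSyl p N F)
    (hC : ∀ g ∈ N, g ∈ NN F → ∀ f ∈ F, Commute f g)
    {a b : G} (ha : PrEl p a) (hb : PrEl p b) (haN : a ∈ N) (hbN : b ∈ N) : PrEl p (a * b) := by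
  let F' : Subgroup N := F.subgroupOf N
  have hcard : Nat.card F' = Nat.card F :=
    Nat.card_congr (Subgroup.subgroupOfEquivOfLe hF.1).toEquiv
  let S : Sylow p N := Sylow.ofCard F' (by rw [hcard, hF.2.2]; rfl)
  have hS : (S : Subgroup N) = F' := rfl
  have hn : Subgroup.normalizer (S : Subgroup N) ≤ Subgroup.centralizer ((S : Subgroup N) : Set N) := by
    rintro ⟨g, hg⟩ hgn
    rw [Subgroup.mem_centralizer_iff]
    rintro ⟨f, hfN⟩ hf
    have hf' : f ∈ F := hf
    rw [Subgroup.mem_normalizer_iff] at hgn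
    have hgN : g ∈ NN F := mem_NN_of_le fun t ht => by
      have := (hgn ⟨t, hF.1 ht⟩).1 ht
      exact this
    ext
    exact hC g hg hgN f hf'
  have hk := MonoidHom.not_dvd_card_ker_transferSylow S hn
  have key : ∀ c (hc : c ∈ N), PrEl p c → (⟨c, hc⟩ : N) ∈ (MonoidHom.transferSylow S hn).ker := by
    intro c hc hcp
    apply prel_ker S.2
    obtain ⟨m, h1, h2⟩ := hcp
    exact ⟨m, h1, by ext; simpa using h2⟩
  have hab := mul_mem (key a haN ha) (key b hbN hb)
  refine ⟨_, (Nat.Prime.coprime_iff_not_dvd hp.out).2 hk, ?_⟩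
  have := pow_card_eq_one' (x := (⟨_, hab⟩ : (MonoidHom.transferSylow S hn).ker))
  have h2 := congrArg (fun t : (MonoidHom.transferSylow S hn).ker => ((t : N) : G)) this
  simpa using h2

theorem WD.closed (d : WD p P w) (h : RHyp p q G) (hq : q = p * Nat.card (Zp p G))
    (a b : G) (ha : PrEl p a) (hb : PrEl p b) : PrEl p (a * b) := by
  let S : Sylow p G := Sylow.ofCard P (by
    rw [d.syl.2.2, pp, Subgroup.card_top])
  have hS : (S : Subgroup G) = P := rfl
  have hfoc : Subgroup.focalSubgroup (S : Subgroup G) ≤ PX p w := by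
    rw [Subgroup.focalSubgroup_def, Subgroup.closure_le]
    rintro _ ⟨hg, x, hx, u, rfl⟩
    have hx' : x ∈ P := hx
    rw [SetLike.mem_coe, commutatorElement_def] at *
    have hg' : x * u * x⁻¹ * u⁻¹ ∈ P := hg
    have h1 : u * x⁻¹ * u⁻¹ ∈ P := by
      have := mul_mem (inv_mem hx') hg'
      simpa [mul_assoc] using this
    have h2 := d.F h hq (inv_mem hx') h1
    have h3 := conj_mem_of_NN (d.NNW h hx') h2
    simpa [mul_assoc] using h3
  let N : Subgroup G := (S : Subgroup G).transferFocal.ker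
  have hNf : N ⊓ P = Subgroup.focalSubgroup (S : Subgroup G) :=
    Subgroup.ker_transferFocal_inf_eq_focalSubgroup S
  have hNn : N.Normal := MonoidHom.normal_ker _
  have hFW : N ⊓ P ≤ PX p w := hNf.le.trans hfoc
  have hprel : ∀ y, PrEl p y → y ∈ N := fun y hy => prel_ker (S.2.to_quotient _) _ hy
  have hF : IsSyl p N (N ⊓ P) := by
    obtain ⟨T, hT⟩ := exists_syl p N
    obtain ⟨k, -, hk⟩ := d.syl.exists_conj hT.2.1 le_top
    apply isSyl_of_le_card (d.syl.2.1.to_le inf_le_right) inf_le_left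
    rw [← hT.2.2, ← card_cj k⁻¹ T]
    apply Subgroup.card_le_of_le
    refine le_inf ?_ ?_
    · intro t ht
      rw [mem_cj] at ht
      have := hNn.conj_mem _ (hT.1 ht) k⁻¹
      simpa [mul_assoc] using this
    · have := cj_mono (g := k⁻¹) hk
      rwa [cj_inv_cj] at this
  have hW : ∀ u ∈ PX p w, ∀ v ∈ PX p w, Commute u v := by
    intro u hu v hv
    have h1 := ((h.mem_PX d.pel d.nZ).1 hv).2
    rw [h.AZ_eq hq d.pel d.nZ] at hu
    exact mem_CC.1 (AZ_le (mem_CC.2 h1.symm) (Zp_le_CC v) hu)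
  refine burnside_closed hF ?_ ha hb (hprel a ha) (hprel b hb)
  intro g hg hgN f hf
  obtain ⟨x, y, hx, hy, hxy, -, hxg, hyg⟩ := decomp p g
  rw [← hxy]
  have hxF : x ∈ N ⊓ P :=
    hF.le_of_NN (isPGroup_zpowers hx) (Subgroup.zpowers_le.2 (zpowers_le_of hg hxg))
      (Subgroup.zpowers_le.2 (zpowers_le_of hgN hxg)) (Subgroup.mem_zpowers x)
  have hyN := zpowers_le_of hgN hyg
  refine (hW f (hFW hf) x (hFW hxF)).mul_right ?_
  by_cases hfz : f ∈ Zp p G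
  · exact (hfz.2 y).symm
  have hfp := pel_of_mem hF.2.1 hf
  have e1 := h.AZ_eq_of_mem hq d.pel d.nZ (hFW hf) hfz
  have e2 := h.AZ_eq_of_mem hq d.pel d.nZ (hFW (conj_mem_of_NN hyN hf)) (by rwa [Zp_conj])
  have e3 := h.cj_PX hfp hfz y
  have hyW : y ∈ NN (PX p w) := by
    rw [mem_NN]
    rw [e1, e2] at e3
    exact e3
  exact h.PX_comm d.pel d.nZ (hFW hf) hy (MX_prel hy (d.NNW_le h hq hyW))

theorem RHyp.closed (h : RHyp p q G) (a b : G) (ha : PrEl p a) (hb : PrEl p b) :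
    PrEl p (a * b) := by
  by_cases hA : ∃ A : Subgroup G, IsA p q A
  swap
  · exact h.no_small hA a b ha hb
  obtain ⟨A, hA⟩ := hA
  obtain ⟨P, hP, hAP⟩ := exists_syl_ge hA.pgroup (le_top : A ≤ ⊤)
  by_cases hu : ∀ A', IsA p q A' → A' ≤ P → A' = A
  · exact h.unique_case hP hA hAP hu a b ha hb
  push Not at hu
  obtain ⟨A', hA', hAP', hne⟩ := hu
  have hZ : Zp p G < P := by
    refine lt_of_le_of_ne (Zp_le_syl le_top hP) ?_
    intro he
    have h1 := h.Zp_lt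
    rw [he, hP.2.2] at h1
    exact absurd h.2.1 h1.le.not_gt
  obtain ⟨w, hw, hwn, hwp, hPM⟩ := exists_w hP.2.1 hZ
  have d : WD p P w := ⟨hP, hw, hwn, hwp, hPM⟩
  exact d.closed h (d.q_eq h hA hAP hA' hAP' hne) a b ha hb

end PK

theorem pp_CC_mul_pIndex {G : Type*} [Group G] [Finite G] (p : ℕ) (x : G) :
    pp p (CC x) * pIndex p x = pp p (⊤ : Subgroup G) := by
  have h1 : Nat.card (CC x) ≠ 0 := Nat.card_pos.ne'
  have h2 : (CC x).index ≠ 0 := Subgroup.index_ne_zero_of_finite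
  have h3 : Nat.card (⊤ : Subgroup G) = Nat.card (CC x) * (CC x).index := by
    rw [Subgroup.card_mul_index, Subgroup.card_top]
  rw [pp, pp, h3, Nat.factorization_mul h1 h2, Finsupp.add_apply, pow_add]
  rfl

theorem rp_star_normal_p_complement {G : Type*} [Group G] [Finite G] (p : ℕ)
    (hp : p.Prime) (hR : IsPIndexExtremal p G)
    (hstar : ∃ x : G, IsPElement p x ∧ pIndex p x ≠ 1) :
    ∃ N : Subgroup G, N.Normal ∧ ¬ p ∣ Nat.card N ∧ ∃ k : ℕ, N.index = p ^ k := by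
  haveI := Fact.mk hp
  obtain ⟨x, ⟨k, hk⟩, hx⟩ := hstar
  obtain ⟨n, -, hu⟩ := hR
  have hxn := hu _ ⟨hx, x, rfl⟩
  have hpos : ∀ g : G, 0 < pIndex p g := fun g => pow_pos hp.pos _
  have hR' : RHyp p (pp p (CC x)) G := by
    refine ⟨fun g => ?_, ?_, x, ⟨k, by rw [← hk, pow_orderOf_eq_one]⟩, rfl⟩
    · by_cases hg : pIndex p g = 1
      · left; rw [← pp_CC_mul_pIndex p g, hg, mul_one]
      · right
        have hgn := hu _ ⟨hg, g, rfl⟩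
        have h1 := pp_CC_mul_pIndex p g
        rw [← pp_CC_mul_pIndex p x, hgn, hxn] at h1
        exact Nat.eq_of_mul_eq_mul_right (by rw [← hxn]; exact hpos x) h1
    · rw [← pp_CC_mul_pIndex p x]
      have h1 : 0 < pp p (CC x) := pow_pos hp.pos _
      have h2 := hpos x
      exact lt_mul_of_one_lt_right h1 (by omega)
  exact final_of_closed (p := p) (fun a b ha hb => hR'.closed a b ha hb)
end

section
/- Let G be a finite group and p a prime. Suppose G ∈ R(p)* and let P be a Sylow p-subgroup of G. Then the center of P is contained in the center of G, i.e., Z(P) ≤ Z(G). -/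
namespace RpStar

/-- `U` is a `p`-subgroup of `K` of order the full `p`-part of `|K|`. -/
def SylIn {G : Type*} [Group G] (p : ℕ) (K U : Subgroup G) : Prop :=
  U ≤ K ∧ Nat.card U = p ^ (Nat.card K).factorization p

theorem SylIn.isPGroup {G : Type*} [Group G] {p : ℕ} {K U : Subgroup G}
    (h : SylIn p K U) : IsPGroup p U := IsPGroup.of_card h.2

theorem exists_sylIn {G : Type*} [Group G] [Finite G] {p : ℕ} [Fact p.Prime]
    (K A : Subgroup G) (hA : IsPGroup p A) (hAK : A ≤ K) : ∃ U, A ≤ U ∧ SylIn p K U := by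
  have h1 : IsPGroup p (A.subgroupOf K) := hA.comap_subtype
  obtain ⟨Q, hQ⟩ := h1.exists_le_sylow
  refine ⟨(Q : Subgroup K).map K.subtype, ?_, ?_, ?_⟩
  · have := Subgroup.map_mono (f := K.subtype) hQ
    rwa [Subgroup.subgroupOf_map_subtype, inf_eq_left.mpr hAK] at this
  · exact Subgroup.map_subtype_le _
  · rw [Subgroup.card_map_of_injective K.subtype_injective]
    exact Q.card_eq_multiplicity

/-- A `p`-subgroup of `K` centralizing a Sylow subgroup `U` of `K` lies in `U`. -/
theorem SylIn.absorb {G : Type*} [Group G] [Finite G] {p : ℕ} [Fact p.Prime]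
    {K U V : Subgroup G} (hU : SylIn p K U) (hV : IsPGroup p V) (hVK : V ≤ K)
    (hc : ∀ v ∈ V, ∀ u ∈ U, v * u = u * v) : V ≤ U := by
  have hVn : V ≤ Subgroup.normalizer (U : Set G) := by
    intro v hv
    rw [Subgroup.mem_normalizer_iff]
    intro h
    constructor
    · intro hh
      rw [hc v hv h hh]; simpa using hh
    · intro hh
      have := hc v hv _ hh
      have h2 : h = v * h * v⁻¹ := by
        have h3 : v * (v * h * v⁻¹) = v * h := by rw [this]; group
        exact (mul_left_cancel h3).symm
      rw [h2]; exact hh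
  have hs : IsPGroup p (U ⊔ V : Subgroup G) :=
    IsPGroup.to_sup_of_normal_left' hU.isPGroup hV hVn
  have hle : U ⊔ V ≤ K := sup_le hU.1 hVK
  obtain ⟨k, hk⟩ := IsPGroup.iff_card.mp hs
  have hp : p.Prime := Fact.out
  have hd : p ^ k ∣ Nat.card K := hk ▸ Subgroup.card_dvd_of_le hle
  have hk2 : k ≤ (Nat.card K).factorization p :=
    (hp.pow_dvd_iff_le_factorization Nat.card_pos.ne').mp hd
  have : Nat.card (U ⊔ V : Subgroup G) ≤ Nat.card U := by
    rw [hk, hU.2]; exact Nat.pow_le_pow_right hp.pos hk2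
  have := Subgroup.eq_of_le_of_card_ge (le_sup_left : U ≤ U ⊔ V) this
  rw [this]; exact le_sup_right

theorem coprime_centralizer {G : Type*} [Group G] {y b : G} (h : Commute y b)
    (hco : (orderOf y).Coprime (orderOf b)) :
    ∃ e f : ℕ, (y * b) ^ e = y ∧ (y * b) ^ f = b := by
  have key : ∀ {y b : G}, Commute y b → (orderOf y).Coprime (orderOf b) →
      ∃ e : ℕ, (y * b) ^ e = y := by
    intro y b h hco
    obtain ⟨e, h1, h2⟩ := Nat.chineseRemainder hco 1 0
    refine ⟨e, ?_⟩
    have h3 : y ^ e = y ^ 1 := pow_eq_pow_iff_modEq.mpr h1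
    have h4 : b ^ e = b ^ 0 := pow_eq_pow_iff_modEq.mpr h2
    rw [h.mul_pow, h3, h4]; simp
  obtain ⟨e, he⟩ := key h hco
  obtain ⟨f, hf⟩ := key h.symm hco.symm
  exact ⟨e, f, he, by rw [h.eq]; exact hf⟩

theorem decomp {G : Type*} [Group G] [Finite G] {p : ℕ} (hp : p.Prime) (g : G) :
    ∃ i j k : ℕ, g = g ^ i * g ^ j ∧ (g ^ i) ^ p ^ k = 1 ∧ p.Coprime (orderOf (g ^ j)) := by
  have hN : orderOf g ≠ 0 := (orderOf_pos g).ne'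
  set k := (orderOf g).factorization p
  set s := orderOf g / p ^ k
  have hks : p ^ k * s = orderOf g := Nat.ordProj_mul_ordCompl_eq_self _ _
  have hps : p.Coprime s := Nat.coprime_ordCompl hp hN
  have hco : (p ^ k).Coprime s := hps.pow_left k
  obtain ⟨i, hi1, hi2⟩ := Nat.chineseRemainder hco 1 0
  obtain ⟨j, hj1, hj2⟩ := Nat.chineseRemainder hco 0 1
  refine ⟨i, j, k, ?_, ?_, ?_⟩
  · rw [← pow_add]
    have : i + j ≡ 1 [MOD orderOf g] := by
      rw [← hks]
      exact (Nat.modEq_and_modEq_iff_modEq_mul hco).mp ⟨hi1.add hj1, hi2.add hj2⟩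
    have h := pow_eq_pow_iff_modEq.mpr this
    rw [h, pow_one]
  · rw [← pow_mul, ← orderOf_dvd_iff_pow_eq_one, ← hks, mul_comm]
    exact mul_dvd_mul_right ((Nat.modEq_zero_iff_dvd).mp hi2) _
  · have : orderOf (g ^ j) ∣ s := by
      rw [orderOf_dvd_iff_pow_eq_one, ← pow_mul, ← orderOf_dvd_iff_pow_eq_one, ← hks]
      exact mul_dvd_mul_right ((Nat.modEq_zero_iff_dvd).mp hj1) _
    exact hps.coprime_dvd_right this

/-- exponent of `p` in the order of the centralizer -/
noncomputable def cen {G : Type*} [Group G] (p : ℕ) (g : G) : ℕ :=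
  (Nat.card (Subgroup.centralizer {g})).factorization p

theorem mem_cent {G : Type*} [Group G] {g w : G} :
    w ∈ Subgroup.centralizer {g} ↔ w * g = g * w := by
  rw [Subgroup.mem_centralizer_singleton_iff]

/-- the centre of a subgroup as a subgroup of `G` -/
abbrev ZZ {G : Type*} [Group G] (R : Subgroup G) : Subgroup G :=
  (Subgroup.center R).map R.subtype

theorem mem_ZZ {G : Type*} [Group G] {R : Subgroup G} {w : G} :
    w ∈ ZZ R ↔ w ∈ R ∧ ∀ r ∈ R, r * w = w * r := by
  simp only [ZZ, Subgroup.mem_map, Subgroup.mem_center_iff]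
  constructor
  · rintro ⟨x, hx, rfl⟩
    exact ⟨x.2, fun r hr => congrArg Subtype.val (hx ⟨r, hr⟩)⟩
  · rintro ⟨h1, h2⟩
    exact ⟨⟨w, h1⟩, fun r => Subtype.ext (h2 r r.2), rfl⟩

theorem isPGroup_zpowers {G : Type*} [Group G] {p : ℕ} {w : G} {k : ℕ}
    (h : w ^ p ^ k = 1) : IsPGroup p (Subgroup.zpowers w) := by
  rintro ⟨_, i, rfl⟩
  refine ⟨k, Subtype.ext ?_⟩
  show (w ^ i) ^ p ^ k = 1
  rw [← zpow_natCast, ← zpow_mul, mul_comm, zpow_mul, zpow_natCast, h, one_zpow]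

section main
variable {G : Type*} [Group G] [Finite G] {p : ℕ} [hpf : Fact p.Prime] {m d : ℕ}

theorem ZZ_isPGroup (R : Sylow p G) : IsPGroup p (ZZ (R : Subgroup G)) :=
  R.2.to_le (Subgroup.map_subtype_le _)

theorem ncard_ZZ (R P : Sylow p G) : Nat.card (ZZ (R : Subgroup G)) = Nat.card (ZZ (P : Subgroup G)) := by
  rw [Subgroup.card_map_of_injective (Subgroup.subtype_injective _),
    Subgroup.card_map_of_injective (Subgroup.subtype_injective _)]
  exact Nat.card_congr (Subgroup.centerCongr (R.equiv P)).toEquiv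

theorem cen_le_of_le {a b : G} (h : Subgroup.centralizer {a} ≤ Subgroup.centralizer {b}) :
    cen p a ≤ cen p b :=
  (Nat.factorization_le_iff_dvd Nat.card_pos.ne' Nat.card_pos.ne').mpr
    (Subgroup.card_dvd_of_le h) p

theorem cen_le (a : G) : cen p a ≤ (Nat.card G).factorization p :=
  (Nat.factorization_le_iff_dvd Nat.card_pos.ne' Nat.card_pos.ne').mpr
    (Subgroup.card_subgroup_dvd_card _) p

/-- the set of `p`-elements of trivial `p`-index -/
def Om (G : Type*) [Group G] (p : ℕ) : Set G :=
  {w | IsPElement p w ∧ cen p w = (Nat.card G).factorization p}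

theorem isPElement_of_mem {U : Subgroup G} (hU : IsPGroup p U) {w : G} (hw : w ∈ U) :
    IsPElement p w := by
  obtain ⟨k, hk⟩ := hU ⟨w, hw⟩
  have : w ^ p ^ k = 1 := congrArg Subtype.val hk
  obtain ⟨j, -, hj⟩ := (Nat.dvd_prime_pow hpf.out).mp (orderOf_dvd_of_pow_eq_one this)
  exact ⟨j, hj⟩

theorem ZZ_subset_Om (R : Sylow p G) {w : G} (hw : w ∈ ZZ (R : Subgroup G)) : w ∈ Om G p := by
  refine ⟨isPElement_of_mem (ZZ_isPGroup R) hw, le_antisymm (cen_le w) ?_⟩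
  have hle : (R : Subgroup G) ≤ Subgroup.centralizer {w} :=
    fun r hr => mem_cent.mpr ((mem_ZZ.mp hw).2 r hr)
  have := Subgroup.card_dvd_of_le hle
  rw [R.card_eq_multiplicity] at this
  exact (hpf.out.pow_dvd_iff_le_factorization Nat.card_pos.ne').mp this

theorem Om_conj {w : G} (hw : w ∈ Om G p) : ∃ R : Sylow p G, w ∈ ZZ (R : Subgroup G) := by
  obtain ⟨⟨k, hk⟩, hc⟩ := hw
  obtain ⟨U, -, hU⟩ := exists_sylIn (p := p) (Subgroup.centralizer {w}) ⊥ IsPGroup.of_bot bot_le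
  have hcard : Nat.card U = p ^ (Nat.card G).factorization p := by rw [hU.2]; exact congrArg _ hc
  refine ⟨Sylow.ofCard U hcard, ?_⟩
  have hcomm : ∀ u ∈ U, u * w = w * u := fun u hu => mem_cent.mp (hU.1 hu)
  have hz : Subgroup.zpowers w ≤ U := by
    refine hU.absorb (isPGroup_zpowers (k := k) (hk ▸ pow_orderOf_eq_one w)) ?_ ?_
    · rw [Subgroup.zpowers_le]; exact mem_cent.mpr rfl
    · rintro _ ⟨i, rfl⟩ u hu
      exact ((show Commute u w from hcomm u hu).zpow_right i).symm
  rw [mem_ZZ]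
  exact ⟨hz (Subgroup.mem_zpowers w), hcomm⟩

theorem good_of_typeN {y g : G} (hy : IsPElement p y) (hyg : y * g = g * y)
    (hty : cen p y = d) (hall : ∀ x : G, cen p x = (Nat.card G).factorization p ∨ cen p x = d)
    (hd : d < (Nat.card G).factorization p) :
    ∃ R : Sylow p G, ∀ z ∈ ZZ (R : Subgroup G), z * g = g * z := by
  obtain ⟨i, j, k, hg, ha, hb⟩ := decomp hpf.out g
  obtain ⟨l, hl⟩ := hy
  set a := g ^ i
  set b := g ^ j
  have hCy : Commute y g := hyg
  have hya : Commute y a := hCy.pow_right i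
  have hyb : Commute y b := hCy.pow_right j
  have hab : Commute a b := Commute.pow_pow_self g i j
  obtain ⟨e, f, he, hf⟩ := coprime_centralizer hyb (by rw [hl]; exact hb.pow_left l)
  have hle1 : Subgroup.centralizer {y * b} ≤ Subgroup.centralizer {y} := by
    intro w hw
    have : Commute w (y * b) := mem_cent.mp hw
    have := this.pow_right e
    rw [he] at this
    exact mem_cent.mpr this
  have hle2 : Subgroup.centralizer {y * b} ≤ Subgroup.centralizer {b} := by
    intro w hw
    have : Commute w (y * b) := mem_cent.mp hw
    have := this.pow_right f
    rw [hf] at this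
    exact mem_cent.mpr this
  have hcyb : cen p (y * b) = d := by
    rcases hall (y * b) with h | h
    · have := cen_le_of_le (p := p) hle1
      omega
    · exact h
  obtain ⟨U, haU, hU⟩ := exists_sylIn (p := p) (Subgroup.centralizer {y * b})
    (Subgroup.zpowers a) (isPGroup_zpowers ha)
    (by rw [Subgroup.zpowers_le]; exact mem_cent.mpr (hya.symm.mul_right hab))
  have haU : a ∈ U := haU (Subgroup.mem_zpowers a)
  have hUy : SylIn p (Subgroup.centralizer {y}) U := by
    refine ⟨hU.1.trans hle1, ?_⟩
    rw [hU.2]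
    exact congrArg _ (hcyb.trans hty.symm)
  have hyU : y ∈ U := by
    have : Subgroup.zpowers y ≤ U := by
      refine hUy.absorb (isPGroup_zpowers (k := l) (hl ▸ pow_orderOf_eq_one y)) ?_ ?_
      · rw [Subgroup.zpowers_le]; exact mem_cent.mpr rfl
      · rintro _ ⟨i, rfl⟩ u hu
        exact ((show Commute u y from mem_cent.mp (hUy.1 hu)).zpow_right i).symm
    exact this (Subgroup.mem_zpowers y)
  obtain ⟨R, hR⟩ := hU.isPGroup.exists_le_sylow
  have hZU : ZZ (R : Subgroup G) ≤ U := by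
    refine hUy.absorb (ZZ_isPGroup R) ?_ ?_
    · intro z hz
      exact mem_cent.mpr ((mem_ZZ.mp hz).2 y (hR hyU)).symm
    · intro z hz u hu
      exact ((mem_ZZ.mp hz).2 u (hR hu)).symm
  refine ⟨R, fun z hz => ?_⟩
  have h1 : Commute z a := ((mem_ZZ.mp hz).2 a (hR haU)).symm
  have h2 : Commute z b := mem_cent.mp (hle2 (hU.1 (hZU hz)))
  have := h1.mul_right h2
  rw [← hg] at this
  exact this

/-- every element commutes with at least `|Z(P)|` elements of `Om` -/
theorem many_fixed (P : Sylow p G)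
    (hall : ∀ x : G, cen p x = (Nat.card G).factorization p ∨ cen p x = d)
    (hd : d < (Nat.card G).factorization p) {x : G} (hx : IsPElement p x) (hcx : cen p x = d)
    (g : G) : ∃ A : Subgroup G, Nat.card (ZZ (P : Subgroup G)) ≤ Nat.card A ∧
      ∀ w ∈ A, w ∈ Om G p ∧ w * g = g * w := by
  obtain ⟨T, -, hT⟩ := exists_sylIn (p := p) (Subgroup.centralizer {g}) ⊥ IsPGroup.of_bot bot_le
  have hTg : ∀ t ∈ T, t * g = g * t := fun t ht => mem_cent.mp (hT.1 ht)
  by_cases hTO : ∀ t ∈ T, t ∈ Om G p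
  · refine ⟨T, ?_, fun w hw => ⟨hTO w hw, hTg w hw⟩⟩
    -- `|Z(P)| ≤ p ^ d`
    obtain ⟨R, hR⟩ := good_of_typeN hx rfl hcx hall hd
    rw [ncard_ZZ P R, hT.2]
    have hle : ZZ (R : Subgroup G) ≤ Subgroup.centralizer {x} := fun z hz => mem_cent.mpr (hR z hz)
    obtain ⟨k, hk⟩ := IsPGroup.iff_card.mp (ZZ_isPGroup R)
    have hdv := Subgroup.card_dvd_of_le hle
    rw [hk] at hdv ⊢
    have h1 : k ≤ cen p x := (hpf.out.pow_dvd_iff_le_factorization Nat.card_pos.ne').mp hdv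
    have h2 : d ≤ cen p g := by rcases hall g with h | h <;> omega
    exact Nat.pow_le_pow_right hpf.out.pos (h1.trans (hcx.le.trans h2))
  · push Not at hTO
    obtain ⟨y, hyT, hyO⟩ := hTO
    have hyp : IsPElement p y := isPElement_of_mem hT.isPGroup hyT
    have hyd : cen p y = d := (hall y).resolve_left fun h => hyO ⟨hyp, h⟩
    obtain ⟨R, hR⟩ := good_of_typeN hyp (hTg y hyT) hyd hall hd
    exact ⟨ZZ (R : Subgroup G), (ncard_ZZ P R).le, fun w hw => ⟨ZZ_subset_Om R hw, hR w hw⟩⟩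

theorem cen_conj (g w : G) : cen p (g * w * g⁻¹) = cen p w := by
  have : Nat.card (Subgroup.centralizer {g * w * g⁻¹}) = Nat.card (Subgroup.centralizer {w}) := by
    have hf : ∀ u : Subgroup.centralizer {w},
        g * u.1 * g⁻¹ ∈ Subgroup.centralizer {g * w * g⁻¹} := by
      intro u
      have h := mem_cent.mp u.2
      rw [mem_cent]
      calc g * u.1 * g⁻¹ * (g * w * g⁻¹) = g * (u.1 * w) * g⁻¹ := by group
        _ = g * (w * u.1) * g⁻¹ := by rw [h]
        _ = _ := by group
    have hf' : ∀ u : Subgroup.centralizer {g * w * g⁻¹},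
        g⁻¹ * u.1 * g ∈ Subgroup.centralizer {w} := by
      intro u
      have h := mem_cent.mp u.2
      rw [mem_cent]
      calc g⁻¹ * u.1 * g * w = g⁻¹ * (u.1 * (g * w * g⁻¹)) * g := by group
        _ = g⁻¹ * (g * w * g⁻¹ * u.1) * g := by rw [h]
        _ = _ := by group
    refine (Nat.card_congr ⟨fun u => ⟨_, hf u⟩, fun u => ⟨_, hf' u⟩, ?_, ?_⟩).symm
    · intro u; apply Subtype.ext; simp [mul_assoc]
    · intro u; apply Subtype.ext; simp [mul_assoc]
  rw [cen, cen, this]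

theorem Om_smul {g w : G} (hw : w ∈ Om G p) : g * w * g⁻¹ ∈ Om G p := by
  obtain ⟨⟨k, hk⟩, h2⟩ := hw
  refine ⟨⟨k, ?_⟩, by rw [cen_conj, h2]⟩
  rw [← hk]
  exact orderOf_injective (MulAut.conj g).toMonoidHom (MulAut.conj g).injective w

/-- `Om` as a `G`-set under conjugation -/
def OmAct (G : Type*) [Group G] [Finite G] (p : ℕ) [Fact p.Prime] : SubMulAction (ConjAct G) G where
  carrier := Om G p
  smul_mem' c {x} hx := by
    rw [ConjAct.smul_def]
    exact Om_smul hx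

theorem main_aux (P : Sylow p G)
    (hall : ∀ x : G, cen p x = (Nat.card G).factorization p ∨ cen p x = d)
    (hd : d < (Nat.card G).factorization p) {x : G} (hx : IsPElement p x) (hcx : cen p x = d) :
    ZZ (P : Subgroup G) ≤ Subgroup.center G := by
  classical
  have : Finite (ConjAct G) := Finite.of_equiv G ConjAct.toConjAct.toEquiv
  have : Fintype (ConjAct G) := Fintype.ofFinite _
  have : Finite (OmAct G p) := Subtype.finite
  have : Fintype (OmAct G p) := Fintype.ofFinite _
  have : Fintype (MulAction.orbitRel.Quotient (ConjAct G) (OmAct G p)) := Fintype.ofFinite _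
  have hB := MulAction.sum_card_fixedBy_eq_card_orbits_mul_card_group (ConjAct G) (OmAct G p)
  set N := Nat.card (ZZ (P : Subgroup G)) with hN
  have hfix : ∀ g : ConjAct G, N ≤ Fintype.card (MulAction.fixedBy (OmAct G p) g) := by
    intro g
    obtain ⟨A, hA, hA2⟩ := many_fixed P hall hd hx hcx (ConjAct.ofConjAct g)
    refine hA.trans ?_
    rw [← Nat.card_eq_fintype_card]
    refine Nat.card_le_card_of_injective
      (fun w : A => (⟨⟨w.1, (hA2 w.1 w.2).1⟩, ?_⟩ : MulAction.fixedBy (OmAct G p) g)) ?_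
    · rw [MulAction.mem_fixedBy]
      apply Subtype.ext
      show g • w.1 = w.1
      rw [ConjAct.smul_def, ← (hA2 w.1 w.2).2]
      group
    · intro w w' h
      exact Subtype.ext (congrArg (fun t => (t.1.1 : G)) h)
  have horb : Fintype.card (MulAction.orbitRel.Quotient (ConjAct G) (OmAct G p)) ≤ N := by
    rw [← Nat.card_eq_fintype_card, hN]
    refine Nat.card_le_card_of_surjective
      (fun w : ZZ (P : Subgroup G) =>
        (Quotient.mk'' (⟨w.1, ZZ_subset_Om P w.2⟩ : OmAct G p) :
          MulAction.orbitRel.Quotient (ConjAct G) (OmAct G p))) ?_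
    intro q
    induction q using Quotient.inductionOn' with
    | h w =>
      obtain ⟨R, hR⟩ := Om_conj w.2
      obtain ⟨g, hg⟩ := MulAction.exists_smul_eq G R P
      have hmem : ∀ t : G, t ∈ (P : Subgroup G) ↔ g⁻¹ * t * g ∈ (R : Subgroup G) := by
        intro t
        rw [← hg, Sylow.coe_subgroup_smul, Subgroup.mem_pointwise_smul_iff_inv_smul_mem]
        rw [← map_inv, MulAut.smul_def, MulAut.conj_apply, inv_inv]
      have hz : g * w.1 * g⁻¹ ∈ ZZ (P : Subgroup G) := by
        rw [mem_ZZ] at hR ⊢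
        refine ⟨?_, fun r hr => ?_⟩
        · rw [hmem]
          have : g⁻¹ * (g * w.1 * g⁻¹) * g = w.1 := by group
          rw [this]; exact hR.1
        · have h := hR.2 _ ((hmem r).mp hr)
          calc r * (g * w.1 * g⁻¹) = g * (g⁻¹ * r * g * w.1) * g⁻¹ := by group
            _ = g * (w.1 * (g⁻¹ * r * g)) * g⁻¹ := by rw [h]
            _ = _ := by group
      refine ⟨⟨_, hz⟩, ?_⟩
      apply Quotient.sound'
      rw [MulAction.orbitRel_apply]
      refine ⟨ConjAct.toConjAct g, ?_⟩
      apply Subtype.ext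
      show ConjAct.toConjAct g • w.1 = g * w.1 * g⁻¹
      rw [ConjAct.toConjAct_smul]
  have hpos : 0 < Fintype.card (ConjAct G) := Fintype.card_pos
  have hsum : ∑ _g : ConjAct G, N = N * Fintype.card (ConjAct G) := by
    simp [mul_comm]
  have hge : N * Fintype.card (ConjAct G) ≤
      Fintype.card (MulAction.orbitRel.Quotient (ConjAct G) (OmAct G p)) *
        Fintype.card (ConjAct G) := by
    rw [← hB, ← hsum]; exact Finset.sum_le_sum fun g _ => hfix g
  have horb2 : Fintype.card (MulAction.orbitRel.Quotient (ConjAct G) (OmAct G p)) = N :=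
    le_antisymm horb (Nat.le_of_mul_le_mul_right hge hpos)
  rw [horb2, ← hsum] at hB
  have h1 := (Finset.sum_eq_sum_iff_of_le fun g _ => hfix g).mp hB.symm 1 (Finset.mem_univ _)
  have hcard : Fintype.card (OmAct G p) = N := by
    rw [h1]
    refine Fintype.card_congr ⟨fun w => ⟨w, by simp⟩, fun w => w.1, fun _ => rfl, fun _ => rfl⟩
  have hsurj : Function.Surjective (fun w : OmAct G p =>
      (Quotient.mk'' w : MulAction.orbitRel.Quotient (ConjAct G) (OmAct G p))) :=
    Quotient.mk''_surjective
  have hbij := (Fintype.bijective_iff_surjective_and_card _).mpr ⟨hsurj, hcard.trans horb2.symm⟩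
  intro z hz
  rw [Subgroup.mem_center_iff]
  intro g
  have hzO := ZZ_subset_Om P hz
  have := @hbij.1 (ConjAct.toConjAct g • (⟨z, hzO⟩ : OmAct G p)) ⟨z, hzO⟩ (by
    apply Quotient.sound'
    rw [MulAction.orbitRel_apply]
    exact ⟨_, rfl⟩)
  have h2 : g * z * g⁻¹ = z := by
    have h3 := congrArg Subtype.val this
    rw [← ConjAct.toConjAct_smul]
    exact h3
  exact mul_inv_eq_iff_eq_mul.mp h2

end main
end RpStar

theorem rp_star_center_sylow_le_center {G : Type*} [Group G] [Finite G] (p : ℕ)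
    (hp : p.Prime) (hR : IsPIndexExtremal p G)
    (hstar : ∃ x : G, IsPElement p x ∧ pIndex p x ≠ 1) (P : Sylow p G) :
    (Subgroup.center (P : Subgroup G)).map (P : Subgroup G).subtype ≤ Subgroup.center G := by
  have : Fact p.Prime := ⟨hp⟩
  obtain ⟨x, hx, hx1⟩ := hstar
  obtain ⟨a, -, ha⟩ := hR
  have hsum : ∀ g : G, RpStar.cen p g + (classSize g).factorization p
      = (Nat.card G).factorization p := by
    intro g
    rw [← Subgroup.card_mul_index (Subgroup.centralizer {g}),
      Nat.factorization_mul Nat.card_pos.ne' Subgroup.index_ne_zero_of_finite]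
    rfl
  have hxn : (classSize x).factorization p ≠ 0 := by
    intro h
    apply hx1
    rw [pIndex, h, pow_zero]
  have hall : ∀ g : G, RpStar.cen p g = (Nat.card G).factorization p ∨
      RpStar.cen p g = RpStar.cen p x := by
    intro g
    by_cases hg : pIndex p g = 1
    · left
      have : (classSize g).factorization p = 0 := by
        by_contra h
        exact (Nat.one_lt_pow h hp.one_lt).ne' hg
      have := hsum g
      omega
    · right
      have h : pIndex p g = pIndex p x := (ha _ ⟨hg, g, rfl⟩).trans (ha _ ⟨hx1, x, rfl⟩).symm
      have := Nat.pow_right_injective hp.two_le h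
      have h1 := hsum g
      have h2 := hsum x
      omega
  have hd : RpStar.cen p x < (Nat.card G).factorization p := by
    have := hsum x
    omega
  exact RpStar.main_aux P hall hd hx rfl
end
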